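/- (Strong duality for the restricted first pair of programs.) Under Assumption (A), for every ε ∈ (0,t0) there exist a (D_{1,ε})-admissible measure μ_{1,ε} and a (P_{1,ε})-admissible measure λ_{1,ε} such that ∫ g dμ_{1,ε} = sup{∫ g dμ : μ (D_{1,ε})-admissible} = inf{λ(Ω_ε) : λ (P_{1,ε})-admissible} = λ_{1,ε}(Ω_ε), and the complementary slackness conditions hold: r_{μ_{1,ε}}(t, b(t)) = 1 for λ_{1,ε}-almost every t ∈ Ω_ε, and ∫_{Ω_ε} r_θ(t,b(t)) λ_{1,ε}(dt) = g(θ) for μ_{1,ε}-almost every θ ∈ [2b(0),∞). -/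

import Mathlib

open MeasureTheory Set Filter
open scoped ENNReal NNReal Topology

noncomputable def rTheta (θ t x : ℝ) : ℝ := Real.exp (-θ ^ 2 / (2 * t) + θ * x / t)

noncomputable def rMu (μ : Measure ℝ) (t x : ℝ) : ℝ≥0∞ :=
  ∫⁻ θ, ENNReal.ofReal (rTheta θ t x) ∂μ

/-- `(D_{1,ε})`-admissibility. -/
def D1epsAdm (b : ℝ → ℝ) (t0 ε : ℝ) (μ : Measure ℝ) : Prop :=
  IsFiniteMeasure μ ∧ μ (Set.Ici (2 * b 0))ᶜ = 0 ∧
    ∀ t ∈ Set.Icc ε t0, rMu μ t (b t) ≤ 1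

/-- `(P_{1,ε})`-admissibility. -/
def P1epsAdm (b : ℝ → ℝ) (t0 x0 ε : ℝ) (lam : Measure ℝ) : Prop :=
  IsFiniteMeasure lam ∧ lam (Set.Icc ε t0)ᶜ = 0 ∧
    ∀ θ ∈ Set.Ici (2 * b 0),
      ENNReal.ofReal (rTheta θ t0 x0) ≤ ∫⁻ t, ENNReal.ofReal (rTheta θ t (b t)) ∂lam


lemma lp_fs {Y : Type*} (a : ℝ) (m : Y →₀ ℝ) (f : Y → ℝ) :
    ((a • m).sum fun y b => b * f y) = a * m.sum fun y b => b * f y := by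
  rw [Finsupp.sum_smul_index (by simp), Finsupp.mul_sum]
  simp only [mul_assoc]

section LP
variable {X Y : Type*} [TopologicalSpace X] [CompactSpace X] [T2Space X] [MeasurableSpace X]
  [BorelSpace X] [TopologicalSpace Y] [CompactSpace Y] [T2Space Y] [MeasurableSpace Y]
  [BorelSpace Y]

open CompactlySupportedContinuousMap in
lemma lp_rmk (L : C(X, ℝ) →ₗ[ℝ] ℝ) (hL : ∀ f : C(X, ℝ), (∀ x, 0 ≤ f x) → 0 ≤ L f) :
    ∃ m : Measure X, IsFiniteMeasure m ∧ ∀ f : C(X, ℝ), ∫ x, f x ∂m = L f := by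
  let T : CompactlySupportedContinuousMap X ℝ →ₗ[ℝ] ℝ :=
    { toFun := fun f => L f.toContinuousMap
      map_add' := fun f g => by rw [← map_add]; rfl
      map_smul' := fun c f => by rw [← map_smul]; rfl }
  let Λ := PositiveLinearMap.mk₀ T (fun f hf => hL _ (fun x => by
    have h : (0 : CompactlySupportedContinuousMap X ℝ) ≤ f := hf
    exact h x))
  refine ⟨RealRMK.rieszMeasure Λ, ⟨isCompact_univ.measure_lt_top⟩, fun f => ?_⟩
  exact RealRMK.integral_rieszMeasure Λ (continuousMapEquiv f)

lemma lp_duality (k : X → Y → ℝ) (g : C(X, ℝ)) (hky : ∀ y, Continuous (fun x => k x y))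
    (y0 : Y) (hy0 : ∀ x, k x y0 = 1) :
    ∃ (ν : Measure X) (lam : Measure Y), IsFiniteMeasure ν ∧ IsFiniteMeasure lam ∧
      (∀ y, ∫ x, k x y ∂ν ≤ 1) ∧ (∀ x, Continuous (k x) → g x ≤ ∫ y, k x y ∂lam) ∧
      lam.real univ ≤ ∫ x, g x ∂ν := by
  classical
  let E := C(X, ℝ) × C(Y, ℝ) × ℝ
  let kX : Y → C(X, ℝ) := fun y => ⟨fun x => k x y, hky y⟩
  let S : PointedCone ℝ E :=
    { carrier := {p | ∃ (m : Y →₀ ℝ) (n : X →₀ ℝ) (c : ℝ), 0 ≤ c ∧ (∀ y, 0 ≤ m y) ∧ (∀ x, 0 ≤ n x) ∧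
        (∀ x, - (m.sum fun y a => a * k x y) + c * g x ≤ p.1 x) ∧
        (∀ y, (n.sum fun x a => a * k x y) - c ≤ p.2.1 y) ∧
        (m.sum fun y a => a) - (n.sum fun x a => a * g x) ≤ p.2.2}
      add_mem' := by
        rintro p q ⟨m, n, c, hc, hm, hn, h1, h2, h3⟩ ⟨m', n', c', hc', hm', hn', h1', h2', h3'⟩
        refine ⟨m + m', n + n', c + c', by positivity, fun y => add_nonneg (hm y) (hm' y),
          fun y => add_nonneg (hn y) (hn' y), fun x => ?_, fun y => ?_, ?_⟩
        · rw [Finsupp.sum_add_index' (by simp) (by intros; ring)]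
          have := h1 x; have := h1' x
          change _ ≤ p.1 x + q.1 x
          linarith
        · rw [Finsupp.sum_add_index' (by simp) (by intros; ring)]
          have := h2 y; have := h2' y
          change _ ≤ p.2.1 y + q.2.1 y
          linarith
        · rw [Finsupp.sum_add_index' (by simp) (by intros; ring),
            Finsupp.sum_add_index' (by simp) (by intros; ring)]
          change _ ≤ p.2.2 + q.2.2
          linarith
      zero_mem' := ⟨0, 0, 0, le_rfl, by simp, by simp, by simp, by simp, by simp⟩
      smul_mem' := by
        rintro ⟨a, ha⟩ p ⟨m, n, c, hc, hm, hn, h1, h2, h3⟩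
        refine ⟨a • m, a • n, a * c, by positivity, fun y => mul_nonneg ha (hm y),
          fun y => mul_nonneg ha (hn y), fun x => ?_, fun y => ?_, ?_⟩
        · rw [lp_fs]
          have := mul_le_mul_of_nonneg_left (h1 x) ha
          change _ ≤ a * p.1 x
          linarith
        · rw [lp_fs]
          have := mul_le_mul_of_nonneg_left (h2 y) ha
          change _ ≤ a * p.2.1 y
          linarith
        · have e := lp_fs a m (fun _ => 1)
          simp only [mul_one] at e
          rw [lp_fs, e]
          have := mul_le_mul_of_nonneg_left h3 ha
          change _ ≤ a * p.2.2
          linarith }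
  let D : Submodule ℝ E := LinearMap.range ((LinearMap.inr ℝ C(X,ℝ) (C(Y,ℝ) × ℝ)).comp (LinearMap.inr ℝ C(Y,ℝ) ℝ))
  let f : E →ₗ.[ℝ] ℝ := ⟨D, ((LinearMap.snd ℝ C(Y,ℝ) ℝ).comp (LinearMap.snd ℝ C(X,ℝ) (C(Y,ℝ) × ℝ))).domRestrict D⟩
  have nonneg : ∀ x : f.domain, (x : E) ∈ S → 0 ≤ f x := by
    rintro ⟨p, a, rfl⟩ ⟨m, n, c, hc, hm, hn, h1, h2, h3⟩
    change 0 ≤ a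
    change _ ≤ a at h3
    change ∀ x, _ ≤ (0:ℝ) at h1
    change ∀ x, _ ≤ (0:ℝ) at h2
    refine le_trans ?_ h3
    have key : c * (n.sum fun x a => a * g x) ≤ c * (m.sum fun y a => a) := by
      calc c * (n.sum fun x a => a * g x) = n.sum fun x a => a * (c * g x) := by
            rw [Finsupp.mul_sum]; congr; ext x a; ring
        _ ≤ n.sum fun x a => a * (m.sum fun y d => d * k x y) := by
            apply Finset.sum_le_sum; intro x _
            exact mul_le_mul_of_nonneg_left (by have := h1 x; linarith) (hn x)
        _ = m.sum fun y d => d * (n.sum fun x a => a * k x y) := by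
            simp only [Finsupp.mul_sum]
            rw [Finsupp.sum_comm]
            congr; ext y d; congr; ext x a; ring
        _ ≤ m.sum fun y d => d * c := by
            apply Finset.sum_le_sum; intro y _
            exact mul_le_mul_of_nonneg_left (by have := h2 y; linarith) (hm y)
        _ = _ := by rw [Finsupp.mul_sum]; congr; ext x a; ring
    rcases hc.eq_or_lt with h0 | h0
    · have hn0 : n = 0 := by
        have h := h2 y0
        simp only [hy0, mul_one, ← h0, sub_zero] at h
        have h' := (Finset.sum_eq_zero_iff_of_nonneg (fun x _ => hn x)).1
          (le_antisymm h (Finset.sum_nonneg (fun x _ => hn x)))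
        ext x
        by_cases hx : x ∈ n.support
        · simpa using h' x hx
        · simpa using hx
      rw [hn0]
      simp only [Finsupp.sum_zero_index, sub_zero]
      exact Finset.sum_nonneg (fun x _ => hm x)
    · have := le_of_mul_le_mul_left key h0
      linarith
  have dense : ∀ y, ∃ x : f.domain, (x : E) + y ∈ S := by
    rintro ⟨u, h, a⟩
    let c := ‖h‖
    let M := ‖u‖ + c * ‖g‖
    refine ⟨⟨_, M - a, rfl⟩, Finsupp.single y0 M, 0, c, norm_nonneg _, ?_, by simp, ?_, ?_, ?_⟩
    · intro y
      rw [Finsupp.single_apply]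
      split_ifs
      · positivity
      · exact le_rfl
    · intro x
      change _ ≤ (0:ℝ) + u x
      rw [Finsupp.sum_single_index (by simp), hy0]
      have h1 := abs_le.1 (u.norm_coe_le_norm x)
      have h2 := mul_le_mul_of_nonneg_left (abs_le.1 (g.norm_coe_le_norm x)).2 (norm_nonneg h)
      simp only [M, c]
      linarith [h1.1]
    · intro y
      change _ ≤ (0:ℝ) + h y
      have h1 := abs_le.1 (h.norm_coe_le_norm y)
      simp only [Finsupp.sum_zero_index, c]
      linarith [h1.1]
    · change _ ≤ M - a + a
      rw [Finsupp.sum_single_index (by simp)]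
      simp
  obtain ⟨L, hLf, hLS⟩ := riesz_extension S f nonneg dense
  have hLa : ∀ a : ℝ, L (0, 0, a) = a := fun a => hLf ⟨_, a, rfl⟩
  obtain ⟨ν, hν, hνi⟩ := lp_rmk (L.comp (LinearMap.inl ℝ C(X,ℝ) (C(Y,ℝ) × ℝ))) (fun u hu => by
    refine hLS (u, 0, 0) ⟨0, 0, 0, le_rfl, by simp, by simp, by simpa using hu, by simp, by simp⟩)
  obtain ⟨lam, hl, hli⟩ := lp_rmk (L.comp ((LinearMap.inr ℝ C(X,ℝ) (C(Y,ℝ) × ℝ)).comp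
    (LinearMap.inl ℝ C(Y,ℝ) ℝ))) (fun u hu => by
    refine hLS (0, u, 0) ⟨0, 0, 0, le_rfl, by simp, by simp, by simp, by simpa using hu, by simp⟩)
  refine ⟨ν, lam, hν, hl, fun y => ?_, fun x hkx => ?_, ?_⟩
  · have h := hLS (-kX y, 0, 1) ⟨Finsupp.single y 1, 0, 0, le_rfl, ?_, by simp, ?_, by simp, ?_⟩
    · have e := hνi (kX y)
      change ∫ x, k x y ∂ν = L (kX y, 0, 0) at e
      have : ((-kX y, 0, 1) : E) = (0, 0, 1) - (kX y, 0, 0) := by simp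
      rw [this, map_sub, hLa] at h
      linarith
    · intro z
      rw [Finsupp.single_apply]
      split_ifs <;> simp
    · intro x
      rw [Finsupp.sum_single_index (by simp)]
      change _ ≤ - k x y
      simp
    · rw [Finsupp.sum_single_index (by simp)]
      simp
  · let kY : C(Y, ℝ) := ⟨k x, hkx⟩
    have h := hLS (0, kY, - g x) ⟨0, Finsupp.single x 1, 0, le_rfl, by simp, ?_, by simp, ?_, ?_⟩
    · have e := hli (kY)
      change ∫ y, k x y ∂lam = L (0, kY, 0) at e
      have : ((0, kY, -g x) : E) = (0, 0, -g x) + (0, kY, 0) := by simp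
      rw [this, map_add, hLa] at h
      linarith
    · intro z
      rw [Finsupp.single_apply]
      split_ifs <;> simp
    · intro y
      rw [Finsupp.sum_single_index (by simp)]
      change _ ≤ k x y
      simp
    · rw [Finsupp.sum_single_index (by simp)]
      simp
  · have h := hLS (g, -1, 0) ⟨0, 0, 1, by simp, by simp, by simp, by simp, by simp, by simp⟩
    have e := hli 1
    have e2 := hνi g
    change ∫ x, g x ∂ν = L (g, 0, 0) at e2
    change ∫ y, (1:ℝ) ∂lam = L (0, 1, 0) at e
    have : ((g, -1, 0) : E) = (g, 0, 0) - (0, 1, 0) := by simp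
    rw [this, map_sub] at h
    simp at e
    rw [e, e2]
    linarith
end LP

noncomputable def kk (b : ℝ → ℝ) (t0 θ t : ℝ) : ℝ :=
  Real.exp (-(θ ^ 2 / 2) * (1 / t - 1 / t0) + θ * (b t / t - b t0 / t0))

lemma kk_pos (b : ℝ → ℝ) (t0 θ t : ℝ) : 0 < kk b t0 θ t := Real.exp_pos _

lemma kk_self (b : ℝ → ℝ) (t0 θ : ℝ) : kk b t0 θ t0 = 1 := by simp [kk]

lemma rTheta_eq_kk (b : ℝ → ℝ) (t0 θ t : ℝ) (ht : t ≠ 0) (ht0 : t0 ≠ 0) :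
    rTheta θ t (b t) = rTheta θ t0 (b t0) * kk b t0 θ t := by
  unfold rTheta kk
  rw [← Real.exp_add]
  congr 1
  field_simp
  ring

lemma rTheta_eq_gg (θ t0 x0 B : ℝ) (ht0 : t0 ≠ 0) :
    rTheta θ t0 x0 = rTheta θ t0 B * Real.exp (-((B - x0) / t0) * θ) := by
  unfold rTheta
  rw [← Real.exp_add]
  congr 1
  field_simp
  ring

lemma cont_inv_ext (q : ℝ → ℝ) (hq : Continuous q) (hlim : Tendsto q atTop (𝓝 0)) :
    ContinuousOn (fun w : ℝ => if w = 0 then 0 else q (1 / w)) (Ici 0) := by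
  intro w hw
  rcases eq_or_ne w 0 with rfl | h0
  · rw [← continuousWithinAt_sdiff_self]
    have e : Ici (0:ℝ) \ {0} = Ioi 0 := by ext; simp [lt_iff_le_and_ne, eq_comm]
    rw [e]
    unfold ContinuousWithinAt
    simp only [if_true]
    have : Tendsto (fun w : ℝ => q (1 / w)) (𝓝[>] 0) (𝓝 0) := by
      refine hlim.comp ?_
      exact (tendsto_inv_nhdsGT_zero (𝕜 := ℝ)).congr (fun x => (one_div x).symm)
    refine this.congr' ?_
    filter_upwards [self_mem_nhdsWithin] with x hx
    have : x ≠ 0 := ne_of_gt hx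
    simp [this]
  · apply ContinuousAt.continuousWithinAt
    have : ContinuousAt (fun w : ℝ => q (1 / w)) w := by
      apply ContinuousAt.comp (hq.continuousAt)
      exact continuousAt_const.div continuousAt_id h0
    refine this.congr ?_
    filter_upwards [isOpen_ne.mem_nhds h0] with x hx
    have : x ≠ 0 := hx
    simp [this]

lemma gauss_tendsto (κ β : ℝ) (hκ : 0 < κ) :
    Tendsto (fun θ : ℝ => Real.exp (-(θ ^ 2 / 2) * κ + θ * β)) atTop (𝓝 0) := by
  apply Real.tendsto_exp_atBot.comp
  have h1 : Tendsto (fun θ : ℝ => θ * (-(κ / 2) * θ + β)) atTop atBot := by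
    apply Tendsto.atTop_mul_atBot₀ tendsto_id
    apply tendsto_atBot_add_const_right
    exact (tendsto_id).const_mul_atTop_of_neg (by linarith)
  refine h1.congr ?_
  intro x; ring

lemma dual_nu (b : ℝ → ℝ) (hb : Continuous b) (a t0 ε δ : ℝ) (ha : 0 < a) (hε : 0 < ε)
    (hεt : ε < t0) (hδ : 0 < δ) :
    ∃ (ν lam : Measure ℝ), IsFiniteMeasure ν ∧ IsFiniteMeasure lam ∧ ν (Ici a)ᶜ = 0 ∧
      lam (Icc ε t0)ᶜ = 0 ∧
      (∀ t ∈ Icc ε t0, ∫⁻ θ, ENNReal.ofReal (kk b t0 θ t) ∂ν ≤ 1) ∧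
      (∀ θ ∈ Ici a, ENNReal.ofReal (Real.exp (-δ * θ)) ≤ ∫⁻ t, ENNReal.ofReal (kk b t0 θ t) ∂lam) ∧
      lam univ ≤ ∫⁻ θ, ENNReal.ofReal (Real.exp (-δ * θ)) ∂ν := by
  classical
  let X := Icc (0:ℝ) (1 / a)
  let Y := Icc ε t0
  have ht0 : 0 < t0 := hε.trans hεt
  let k : X → Y → ℝ := fun w t => if t.1 = t0 then 1 else if w.1 = 0 then 0 else kk b t0 (1 / w.1) t.1
  have hk' : ∀ (w : X) (t : Y), w.1 ≠ 0 → k w t = kk b t0 (1 / w.1) t.1 := by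
    intro w t hw
    simp only [k]
    split_ifs with h1
    · rw [h1, kk_self]
    · rfl
  have hk0 : ∀ w t, 0 ≤ k w t := by
    intro w t
    simp only [k]
    split_ifs
    · simp
    · simp
    · exact (kk_pos _ _ _ _).le
  have hcX : ∀ q : ℝ → ℝ, Continuous q → Tendsto q atTop (𝓝 0) →
      Continuous (fun w : X => if w.1 = 0 then 0 else q (1 / w.1)) := by
    intro q hq hl
    have := (cont_inv_ext q hq hl).mono (Icc_subset_Ici_self : Icc (0:ℝ) (1/a) ⊆ _)
    exact continuousOn_iff_continuous_domRestrict.1 this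
  let g : C(X, ℝ) := ⟨fun w => if w.1 = 0 then 0 else Real.exp (-δ * (1 / w.1)),
    hcX (fun θ => Real.exp (-δ * θ)) (by fun_prop) (by
      apply Real.tendsto_exp_atBot.comp
      exact (tendsto_id).const_mul_atTop_of_neg (by linarith))⟩
  have hky : ∀ t : Y, Continuous (fun w => k w t) := by
    intro t
    by_cases h : t.1 = t0
    · simp only [k, h, if_true]; exact continuous_const
    · simp only [k, h, if_false]
      have hlt : t.1 < t0 := lt_of_le_of_ne t.2.2 h
      have htp : 0 < t.1 := hε.trans_le t.2.1
      refine hcX (fun θ => kk b t0 θ t.1) (by unfold kk; fun_prop) ?_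
      unfold kk
      exact gauss_tendsto _ _ (sub_pos.2 (one_div_lt_one_div_of_lt htp hlt))
  have hkx : ∀ w : X, w.1 ≠ 0 → Continuous (k w) := by
    intro w hw
    have : k w = fun t : Y => kk b t0 (1 / w.1) t.1 := by
      ext t; exact hk' w t hw
    rw [this]
    unfold kk
    have hne : ∀ t : Y, t.1 ≠ 0 := fun t => (hε.trans_le t.2.1).ne'
    have h1 : Continuous fun t : Y => 1 / t.1 := continuous_const.div continuous_subtype_val hne
    have h2 : Continuous fun t : Y => b t.1 / t.1 :=
      (hb.comp continuous_subtype_val).div continuous_subtype_val hne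
    fun_prop
  obtain ⟨ν', lam', hν, hl, h1, h2, h3⟩ := lp_duality k g hky ⟨t0, hεt.le, le_rfl⟩ (by intro x; simp [k])
  have hms : MeasurableSet {w : X | w.1 ≠ 0} :=
    measurable_subtype_coe (measurableSet_singleton (0:ℝ)).compl
  have hmi : Measurable (fun w : X => 1 / w.1) := by
    simp only [one_div]; exact measurable_subtype_coe.inv
  have hIntg : ∀ f : X → ℝ, Continuous f → Integrable f ν' := fun f hf =>
    hf.integrable_of_hasCompactSupport (HasCompactSupport.of_compactSpace f)
  have hIntgY : ∀ f : Y → ℝ, Continuous f → Integrable f lam' := fun f hf =>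
    hf.integrable_of_hasCompactSupport (HasCompactSupport.of_compactSpace f)
  have hemb : MeasurableEmbedding (Subtype.val : Y → ℝ) := MeasurableEmbedding.subtype_coe measurableSet_Icc
  refine ⟨(ν'.restrict {w | w.1 ≠ 0}).map (fun w : X => 1 / w.1), lam'.map Subtype.val,
    inferInstance, inferInstance, ?_, ?_, ?_, ?_, ?_⟩
  · rw [Measure.map_apply hmi measurableSet_Ici.compl, Measure.restrict_apply (hmi measurableSet_Ici.compl)]
    convert measure_empty (μ := ν')
    ext w
    simp only [mem_inter_iff, mem_preimage, mem_compl_iff, mem_Ici, not_le, mem_ofPred_eq, mem_empty_iff_false,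
      iff_false, not_and, not_not]
    intro h
    by_contra hw
    have hw' : 0 < w.1 := lt_of_le_of_ne w.2.1 (Ne.symm hw)
    have := w.2.2
    rw [div_lt_iff₀ hw'] at h
    rw [le_div_iff₀ ha] at this
    linarith
  · rw [hemb.map_apply]
    convert measure_empty (μ := lam')
    ext t
    simp
  · intro t ht
    rw [lintegral_map (by unfold kk; fun_prop) hmi]
    calc ∫⁻ w in {w : X | w.1 ≠ 0}, ENNReal.ofReal (kk b t0 (1 / w.1) t) ∂ν'
        = ∫⁻ w in {w : X | w.1 ≠ 0}, ENNReal.ofReal (k w ⟨t, ht⟩) ∂ν' := by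
          apply setLIntegral_congr_fun hms
          intro w hw
          simp only [hk' w ⟨t, ht⟩ hw]
      _ ≤ ∫⁻ w, ENNReal.ofReal (k w ⟨t, ht⟩) ∂ν' := setLIntegral_le_lintegral _ _
      _ = ENNReal.ofReal (∫ w, k w ⟨t, ht⟩ ∂ν') := by
          rw [ofReal_integral_eq_lintegral_ofReal (hIntg _ (hky _)) (ae_of_all _ (fun w => hk0 _ _))]
      _ ≤ 1 := by simpa using h1 ⟨t, ht⟩
  · intro θ hθ
    have hθ0 : 0 < θ := ha.trans_le hθ
    have hw : (1 / θ) ∈ Icc (0:ℝ) (1/a) := ⟨by positivity, one_div_le_one_div_of_le ha hθ⟩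
    have hne : (⟨1/θ, hw⟩ : X).1 ≠ 0 := by simp [hθ0.ne']
    have := h2 ⟨1 / θ, hw⟩ (hkx _ hne)
    rw [hemb.lintegral_map]
    have e1 : g ⟨1/θ, hw⟩ = Real.exp (-δ * θ) := by
      simp [g, hθ0.ne']
    have e2 : ∀ t : Y, k ⟨1/θ, hw⟩ t = kk b t0 θ t.1 := by
      intro t; rw [hk' _ _ hne]; simp
    rw [e1] at this
    refine (ENNReal.ofReal_le_ofReal this).trans ?_
    rw [ofReal_integral_eq_lintegral_ofReal (hIntgY _ (hkx _ hne)) (ae_of_all _ (fun w => hk0 _ _))]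
    simp only [e2]
    exact le_rfl
  · rw [lintegral_map (by fun_prop) hmi, Measure.map_apply measurable_subtype_coe MeasurableSet.univ]
    simp only [preimage_univ]
    have e : ∫⁻ w in {w : X | w.1 ≠ 0}, ENNReal.ofReal (Real.exp (-δ * (1 / w.1))) ∂ν' =
        ∫⁻ w, ENNReal.ofReal (g w) ∂ν' := by
      rw [← lintegral_indicator hms]
      congr 1
      ext w
      by_cases hw : w.1 = 0 <;> simp [g, hw, indicator]
    rw [e, ← ofReal_integral_eq_lintegral_ofReal (hIntg _ g.continuous) (ae_of_all _ (fun w => by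
      simp only [g, ContinuousMap.coe_mk]; split_ifs
      · simp
      · exact (Real.exp_pos _).le))]
    rw [← ofReal_measureReal]
    exact ENNReal.ofReal_le_ofReal h3

lemma weak_dual (ν lam : Measure ℝ) [SFinite ν] [SFinite lam] (K : ℝ → ℝ → ℝ≥0∞)
    (hK : Measurable (Function.uncurry K)) (G : ℝ → ℝ≥0∞)
    (h1 : ∀ᵐ t ∂lam, ∫⁻ θ, K θ t ∂ν ≤ 1) (h2 : ∀ᵐ θ ∂ν, G θ ≤ ∫⁻ t, K θ t ∂lam) :
    ∫⁻ θ, G θ ∂ν ≤ lam univ := by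
  calc ∫⁻ θ, G θ ∂ν ≤ ∫⁻ θ, ∫⁻ t, K θ t ∂lam ∂ν := lintegral_mono_ae h2
    _ = ∫⁻ t, ∫⁻ θ, K θ t ∂ν ∂lam := lintegral_lintegral_swap hK.aemeasurable
    _ ≤ ∫⁻ t, 1 ∂lam := lintegral_mono_ae h1
    _ = lam univ := by simp

lemma slackness (ν lam : Measure ℝ) [SFinite ν] [IsFiniteMeasure lam] (K : ℝ → ℝ → ℝ≥0∞)
    (hK : Measurable (Function.uncurry K)) (G : ℝ → ℝ≥0∞) 
    (h1 : ∀ᵐ t ∂lam, ∫⁻ θ, K θ t ∂ν ≤ 1) (h2 : ∀ᵐ θ ∂ν, G θ ≤ ∫⁻ t, K θ t ∂lam)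
    (h3 : lam univ ≤ ∫⁻ θ, G θ ∂ν) :
    (∀ᵐ t ∂lam, ∫⁻ θ, K θ t ∂ν = 1) ∧ (∀ᵐ θ ∂ν, ∫⁻ t, K θ t ∂lam = G θ) := by
  have hswap := lintegral_lintegral_swap (μ := ν) (ν := lam) (f := K) hK.aemeasurable
  have e1 : ∫⁻ t, ∫⁻ θ, K θ t ∂ν ∂lam ≤ lam univ := by
    simpa using lintegral_mono_ae h1
  have e2 := lintegral_mono_ae h2
  constructor
  · refine ae_eq_of_ae_le_of_lintegral_le h1 ?_ aemeasurable_const ?_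
    · exact (e1.trans_lt (measure_lt_top _ _)).ne
    · simp only [lintegral_const, one_mul]
      exact (h3.trans e2).trans hswap.le
  · have := ae_eq_of_ae_le_of_lintegral_le h2 ?_ (hK.lintegral_prod_right').aemeasurable ?_
    · filter_upwards [this] with θ h using h.symm
    · exact ((e2.trans (hswap.le.trans e1)).trans_lt (measure_lt_top _ _)).ne
    · exact hswap.le.trans (e1.trans h3)

section Fam
open Nat

lemma fam_zeros (p q : ℝ) (hpq : p < q) (f : ℕ → ℝ → ℝ)
    (hd : ∀ k, ∀ s ∈ Ioo p q, HasDerivAt (f k) (f (k + 1) s) s)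
    (hz : ∃ᶠ s in 𝓝[>] p, f 0 s = 0) (k : ℕ) : ∃ᶠ s in 𝓝[>] p, f k s = 0 := by
  induction k with
  | zero => exact hz
  | succ k ih =>
    rw [(nhdsGT_basis p).frequently_iff] at ih ⊢
    intro c hc
    obtain ⟨x, hx, hx0⟩ := ih (min c q) (lt_min hc hpq)
    obtain ⟨y, hy, hy0⟩ := ih x hx.1
    have hxq : x < q := hx.2.trans_le (min_le_right _ _)
    have hxc : x < c := hx.2.trans_le (min_le_left _ _)
    obtain ⟨z, hz, hz0⟩ := exists_hasDerivAt_eq_zero (f := f k) (f' := f (k + 1)) hy.2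
      (fun w hw => (hd k w ⟨hy.1.trans_le hw.1, hw.2.trans_lt hxq⟩).continuousAt.continuousWithinAt)
      (by rw [hx0, hy0]) (fun w hw => hd k w ⟨hy.1.trans hw.1, hw.2.trans hxq⟩)
    exact ⟨z, ⟨hy.1.trans hz.1, hz.2.trans hxc⟩, hz0⟩

lemma fam_upper (p q M : ℝ) (g g' : ℝ → ℝ) (hM : 0 ≤ M)
    (hd : ∀ s ∈ Ioo p q, HasDerivAt g (g' s) s)
    (hz : ∃ᶠ s in 𝓝[>] p, g s = 0) (hg : ∀ s ∈ Ioo p q, g' s ≤ M) :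
    ∀ s ∈ Ioo p q, g s ≤ M * (s - p) := by
  intro s hs
  rw [(nhdsGT_basis p).frequently_iff] at hz
  obtain ⟨z, hz, hz0⟩ := hz s hs.1
  have hsub : Icc z s ⊆ Ioo p q := fun w hw => ⟨hz.1.trans_le hw.1, hw.2.trans_lt hs.2⟩
  have := (convex_Icc z s).image_sub_le_mul_sub_of_deriv_le (f := g) (C := M)
    (fun w hw => (hd w (hsub hw)).continuousAt.continuousWithinAt)
    (fun w hw => (hd w (hsub (interior_subset hw))).differentiableAt.differentiableWithinAt)
    (fun w hw => by
      rw [(hd w (hsub (interior_subset hw))).deriv]; exact hg _ (hsub (interior_subset hw)))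
    z (left_mem_Icc.2 hz.2.le) s (right_mem_Icc.2 hz.2.le) hz.2.le
  have : M * (s - z) ≤ M * (s - p) := mul_le_mul_of_nonneg_left (by linarith [hz.1]) hM
  linarith

lemma fam_cmp (p q : ℝ) (g g' h h' : ℝ → ℝ)
    (hd : ∀ s ∈ Ioo p q, HasDerivAt g (g' s) s) (hdh : ∀ s ∈ Ioo p q, HasDerivAt h (h' s) s)
    (hle : ∀ s ∈ Ioo p q, g' s ≤ h' s)
    (hg : Tendsto g (𝓝[>] p) (𝓝 0)) (hh : Tendsto h (𝓝[>] p) (𝓝 0)) :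
    ∀ s ∈ Ioo p q, g s ≤ h s := by
  intro s hs
  have hmono : MonotoneOn (fun s => h s - g s) (Ioo p q) := by
    apply monotoneOn_of_deriv_nonneg (convex_Ioo p q)
    · intro w hw
      exact ((hdh w hw).sub (hd w hw)).continuousAt.continuousWithinAt
    · intro w hw
      rw [interior_Ioo] at hw
      exact ((hdh w hw).sub (hd w hw)).differentiableAt.differentiableWithinAt
    · intro w hw
      rw [interior_Ioo] at hw
      have := ((hdh w hw).sub (hd w hw)).deriv
      simp only [Pi.sub_def] at this
      rw [this]
      linarith [hle w hw]
  have hl : Tendsto (fun s => h s - g s) (𝓝[>] p) (𝓝 0) := by simpa using hh.sub hg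
  have : 0 ≤ h s - g s := by
    refine le_of_tendsto hl ?_
    filter_upwards [Ioo_mem_nhdsGT hs.1] with z hz
    exact hmono ⟨hz.1, hz.2.trans hs.2⟩ hs hz.2.le
  linarith

lemma fam_taylor (p q : ℝ) (f : ℕ → ℝ → ℝ)
    (hd : ∀ k, ∀ s ∈ Ioo p q, HasDerivAt (f k) (f (k + 1) s) s)
    (hl : ∀ k, Tendsto (f k) (𝓝[>] p) (𝓝 0)) (M : ℕ → ℝ)
    (hM : ∀ k, ∀ s ∈ Ioo p q, |f k s| ≤ M k) (n : ℕ) :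
    ∀ k, ∀ s ∈ Ioo p q, |f k s| ≤ M (k + n) * (s - p) ^ n / n ! := by
  induction n with
  | zero => intro k s hs; simpa using hM k s hs
  | succ n ih =>
    intro k
    have hdh : ∀ s ∈ Ioo p q, HasDerivAt (fun s => M (k + (n + 1)) * (s - p) ^ (n + 1) / (n + 1)!)
        (M (k + 1 + n) * (s - p) ^ n / n !) s := by
      intro s hs
      have h := ((((hasDerivAt_id s).sub_const p).pow (n + 1)).const_mul
        (M (k + (n + 1)))).div_const (((n + 1)! : ℕ) : ℝ)
      convert! h using 1
      rw [show k + 1 + n = k + (n + 1) by ring]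
      have h1 : (n ! : ℝ) ≠ 0 := by positivity
      have h2 : (n + 1 : ℝ) ≠ 0 := by positivity
      push_cast [Nat.factorial_succ]
      field_simp
      simp
    have hlh : Tendsto (fun s => M (k + (n + 1)) * (s - p) ^ (n + 1) / (n + 1)!) (𝓝[>] p) (𝓝 0) := by
      have : Continuous (fun s => M (k + (n + 1)) * (s - p) ^ (n + 1) / (n + 1)!) := by fun_prop
      have h := (this.tendsto p).mono_left (nhdsWithin_le_nhds (s := Ioi p))
      simpa using h
    intro s hs
    rw [abs_le']
    constructor
    · exact fam_cmp p q (f k) (f (k + 1)) _ _ (hd k) hdh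
        (fun s hs => (le_abs_self _).trans (ih (k + 1) s hs)) (hl k) hlh s hs
    · exact fam_cmp p q (fun s => - f k s) (fun s => - f (k + 1) s) _ _ (fun s hs => (hd k s hs).neg) hdh
        (fun s hs => (neg_le_abs _).trans (ih (k + 1) s hs)) (by simpa using (hl k).neg) hlh s hs

lemma famB (p q A C : ℝ) (hpq : p < q) (hA : 0 ≤ A) (hC : 0 < C) (f : ℕ → ℝ → ℝ)
    (hd : ∀ k, ∀ s ∈ Ioo p q, HasDerivAt (f k) (f (k + 1) s) s)
    (hz : ∃ᶠ s in 𝓝[>] p, f 0 s = 0)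
    (hb : ∀ k, ∀ s ∈ Ioo p q, |f k s| ≤ A * C ^ k * k !) :
    ∀ s ∈ Ioo p q, C * (s - p) < 1 → f 0 s = 0 := by
  have hz' := fam_zeros p q hpq f hd hz
  have hl : ∀ k, Tendsto (f k) (𝓝[>] p) (𝓝 0) := by
    intro k
    have hb1 : ∀ s ∈ Ioo p q, |f k s| ≤ (A * C ^ (k + 1) * (k + 1)!) * (s - p) := by
      intro s hs
      rw [abs_le']
      constructor
      · exact fam_upper p q _ (f k) (f (k + 1)) (by positivity) (hd k) (hz' k)
          (fun s hs => (le_abs_self _).trans (hb (k + 1) s hs)) s hs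
      · exact fam_upper p q _ (fun s => - f k s) (fun s => - f (k + 1) s) (by positivity)
          (fun s hs => (hd k s hs).neg) (by simpa using hz' k)
          (fun s hs => (neg_le_abs _).trans (hb (k + 1) s hs)) s hs
    refine squeeze_zero_norm' (a := fun s => (A * C ^ (k + 1) * (k + 1)!) * (s - p)) ?_ ?_
    · filter_upwards [Ioo_mem_nhdsGT hpq] with s hs using hb1 s hs
    · have : Continuous (fun s => (A * C ^ (k + 1) * (k + 1)!) * (s - p)) := by fun_prop
      have h := (this.tendsto p).mono_left (nhdsWithin_le_nhds (s := Ioi p))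
      simpa using h
  intro s hs hCs
  have ht := fun n => fam_taylor p q f hd hl _ hb n 0 s hs
  have hlim : Tendsto (fun n : ℕ => A * (C * (s - p)) ^ n) atTop (𝓝 0) := by
    have := (tendsto_pow_atTop_nhds_zero_of_lt_one
      (mul_nonneg hC.le (by linarith [hs.1])) hCs).const_mul A
    simpa using this
  have h0 : |f 0 s| ≤ 0 := by
    refine ge_of_tendsto hlim (Eventually.of_forall fun n => ?_)
    refine (ht n).trans (le_of_eq ?_)
    have h1 : (n ! : ℝ) ≠ 0 := by positivity
    rw [zero_add, mul_pow]
    field_simp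
  exact abs_nonpos_iff.1 h0

lemma famA (p q A C : ℝ) (hpq : p < q) (hA : 0 ≤ A) (hC : 0 < C) (f : ℕ → ℝ → ℝ)
    (hd : ∀ k, ∀ s ∈ Ioo p q, HasDerivAt (f k) (f (k + 1) s) s)
    (hz : ∃ᶠ s in 𝓝[>] p, f 0 s = 0)
    (hb : ∀ k, ∀ s ∈ Ioo p q, -(A * C ^ k * k !) ≤ (-1) ^ k * f k s) :
    ∃ r > 0, ∀ s ∈ Ioo p (p + r), f 0 s = 0 := by
  have hz' := fam_zeros p q hpq f hd hz
  have hup : ∀ k, ∀ s ∈ Ioo p q, (-1) ^ k * f k s ≤ (A * C ^ (k + 1) * (k + 1)!) * (s - p) := by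
    intro k
    refine fam_upper p q _ (fun s => (-1) ^ k * f k s) (fun s => (-1) ^ k * f (k + 1) s)
      (by positivity) (fun s hs => (hd k s hs).const_mul _) ?_ ?_
    · refine (hz' k).mono fun s hs => by simp [hs]
    · intro s hs
      have := hb (k + 1) s hs
      rw [pow_succ (-1 : ℝ)] at this
      linarith
  have hq : 0 < q - p := by linarith
  have hbd : ∀ k, ∀ s ∈ Ioo p q, |f k s| ≤ (A * (1 + C * (q - p))) * (2 * C) ^ k * k ! := by
    intro k s hs
    have e : |f k s| = |(-1) ^ k * f k s| := by rw [abs_mul]; simp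
    have h2 : ((k : ℝ) + 1) ≤ 2 ^ k := by exact_mod_cast Nat.lt_two_pow_self (n := k)
    have h1 : (1:ℝ) ≤ 2 ^ k := one_le_pow₀ (by norm_num)
    have hpos : 0 ≤ A * C ^ k * k ! := by positivity
    rw [e, abs_le]
    constructor
    · refine le_trans ?_ (hb k s hs)
      rw [neg_le_neg_iff, mul_pow]
      have : 0 ≤ C * (q - p) := by positivity
      nlinarith [mul_le_mul_of_nonneg_left h1 hpos, mul_nonneg (mul_nonneg hpos this) (by positivity : (0:ℝ) ≤ 2 ^ k)]
    · refine (hup k s hs).trans ?_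
      have : s - p ≤ q - p := by linarith [hs.2]
      calc (A * C ^ (k + 1) * (k + 1)!) * (s - p) ≤ (A * C ^ (k + 1) * (k + 1)!) * (q - p) :=
            mul_le_mul_of_nonneg_left this (by positivity)
        _ = (A * C ^ k * k !) * (C * (q - p)) * (k + 1) := by
            push_cast [Nat.factorial_succ]; ring
        _ ≤ (A * C ^ k * k !) * (C * (q - p)) * 2 ^ k :=
            mul_le_mul_of_nonneg_left h2 (by positivity)
        _ ≤ _ := by
            rw [mul_pow]
            nlinarith [mul_nonneg hpos (by positivity : (0:ℝ) ≤ 2 ^ k)]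
  refine ⟨min (q - p) (1 / (2 * C)), by positivity, fun s hs => ?_⟩
  have h1 : s - p < q - p := (by linarith [hs.2] : s - p < _).trans_le (min_le_left _ _)
  have h2 : s - p < 1 / (2 * C) := (by linarith [hs.2] : s - p < _).trans_le (min_le_right _ _)
  refine famB p q _ (2 * C) hpq (by positivity) (by positivity) f hd hz hbd s ⟨hs.1, by linarith⟩ ?_
  rw [lt_div_iff₀ (by positivity)] at h2
  linarith

end Fam

section SeqBounds
open Nat

/-- The recurrence satisfied by signed Taylor coefficients. -/
def SeqRec (x θ : ℝ) (h e : ℕ → ℝ) : Prop :=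
  ∀ k : ℕ, ((k : ℝ) + 1) * e (k + 1) = x * e k + θ * ∑ i ∈ Finset.range (k + 1), h i * e (k - i)

lemma seq_geom (r : ℝ) (h0 : 0 ≤ r) (h1 : r ≤ 1 / 2) (n : ℕ) : ∑ i ∈ Finset.range n, r ^ i ≤ 2 := by
  calc ∑ i ∈ Finset.range n, r ^ i ≤ ∑ i ∈ Finset.range n, (1 / 2 : ℝ) ^ i :=
        Finset.sum_le_sum fun i _ => pow_le_pow_left₀ h0 h1 i
    _ ≤ 2 := by
      have := Summable.sum_le_tsum (Finset.range n) (fun i _ => by positivity) summable_geometric_two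
      rwa [tsum_geometric_two] at this

lemma seq_size (θ H S : ℝ) (hθ : 0 ≤ θ) (hH : 0 ≤ H) (hS : 1 ≤ S) (h e : ℕ → ℝ)
    (hr : SeqRec (θ ^ 2 / 2) θ h e) (hh : ∀ i, |h i| ≤ H * S ^ i) (he : 0 ≤ e 0) (k : ℕ) (M : ℝ)
    (hM1 : 1 ≤ M) (hMk : (k : ℝ) ≤ M) (hMx : θ ^ 2 / 2 ≤ M) :
    ∀ j ≤ k, |e j| ≤ e 0 * ((2 * S + 1 + 4 * H) * M) ^ j / j ! := by
  intro j
  induction j using Nat.strong_induction_on with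
  | _ j ih =>
  intro hj
  rcases j with _ | j
  · simp [abs_of_nonneg he]
  set L := 2 * S + 1 + 4 * H with hL
  have hLpos : 0 < L := by positivity
  have hjM : (j : ℝ) ≤ M := le_trans (by exact_mod_cast (by omega : j ≤ k)) hMk
  have hterm : ∀ i ∈ Finset.range (j + 1), |h i * e (j - i)| ≤
      (e 0 * (L * M) ^ j / j ! * H) * (1 / 2) ^ i := by
    intro i hi
    have hij : i ≤ j := by simpa [Nat.lt_succ_iff] using hi
    have h1 := ih (j - i) (by omega) (by omega)
    have h2 : (j ! : ℝ) ≤ (j - i)! * M ^ i := by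
      have h3 : j ! ≤ (j - i)! * j ^ i := by
        have := Nat.factorial_mul_descFactorial hij
        rw [← this]
        exact Nat.mul_le_mul_left _ (Nat.descFactorial_le_pow j i)
      calc (j ! : ℝ) ≤ (j - i)! * (j : ℝ) ^ i := by exact_mod_cast h3
        _ ≤ _ := by gcongr
    rw [abs_mul]
    calc |h i| * |e (j - i)| ≤ (H * S ^ i) * (e 0 * (L * M) ^ (j - i) / (j - i)!) :=
          mul_le_mul (hh i) h1 (abs_nonneg _) (by positivity)
      _ ≤ (H * (L / 2) ^ i) * (e 0 * (L * M) ^ (j - i) * (M ^ i / j !)) := by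
          gcongr
          · rw [hL]; linarith
          · rw [div_eq_mul_inv]
            refine mul_le_mul_of_nonneg_left ?_ (by positivity)
            rw [inv_eq_one_div, div_le_div_iff₀ (by positivity) (by positivity)]
            linarith
      _ = (e 0 * ((L * M) ^ (j - i) * (L * M) ^ i) / j ! * H) * (1 / 2) ^ i := by
          rw [div_pow, mul_pow L M i, div_pow]; ring
      _ = _ := by rw [← pow_add, Nat.sub_add_cancel hij]
  have hsum : |∑ i ∈ Finset.range (j + 1), h i * e (j - i)| ≤ (e 0 * (L * M) ^ j / j ! * H) * 2 := by
    refine (Finset.abs_sum_le_sum_abs _ _).trans ((Finset.sum_le_sum hterm).trans ?_)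
    rw [← Finset.mul_sum]
    exact mul_le_mul_of_nonneg_left (seq_geom _ (by norm_num) le_rfl _) (by positivity)
  have hθM : θ ≤ 2 * M := by nlinarith [sq_nonneg (θ - 1)]
  have hrj := hr j
  have h0 := ih j (by omega) (by omega)
  have hmain : ((j : ℝ) + 1) * |e (j + 1)| ≤ (e 0 * (L * M) ^ j / j !) * (L * M) := by
    calc ((j : ℝ) + 1) * |e (j + 1)| = |((j : ℝ) + 1) * e (j + 1)| := by
          rw [abs_mul, abs_of_nonneg (by positivity : (0:ℝ) ≤ (j:ℝ) + 1)]
      _ ≤ |θ ^ 2 / 2 * e j| + |θ * ∑ i ∈ Finset.range (j + 1), h i * e (j - i)| := by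
          rw [hrj]; exact abs_add_le _ _
      _ = θ ^ 2 / 2 * |e j| + θ * |∑ i ∈ Finset.range (j + 1), h i * e (j - i)| := by
          rw [abs_mul, abs_mul, abs_of_nonneg hθ, abs_of_nonneg (by positivity : 0 ≤ θ ^ 2 / 2)]
      _ ≤ M * (e 0 * (L * M) ^ j / j !) + (2 * M) * ((e 0 * (L * M) ^ j / j ! * H) * 2) := by
          gcongr
      _ = (e 0 * (L * M) ^ j / j !) * ((1 + 4 * H) * M) := by ring
      _ ≤ _ := by
          refine mul_le_mul_of_nonneg_left ?_ (by positivity)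
          refine mul_le_mul_of_nonneg_right ?_ (by positivity)
          rw [hL]; linarith
  have hfin : |e (j + 1)| ≤ (e 0 * (L * M) ^ j / j !) * (L * M) / ((j : ℝ) + 1) := by
    rw [le_div_iff₀ (by positivity)]; linarith
  refine hfin.trans (le_of_eq ?_)
  rw [Nat.factorial_succ, pow_succ (L * M) j]
  push_cast
  have : (j ! : ℝ) ≠ 0 := by positivity
  field_simp

lemma seq_sign (θ H S : ℝ) (hH : 0 ≤ H) (hS : 1 ≤ S) (h e : ℕ → ℝ)
    (hr : SeqRec (θ ^ 2 / 2) θ h e) (hh : ∀ i, |h i| ≤ H * S ^ i) (he : 0 ≤ e 0)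
    (hθ0 : 0 < θ) (hθ : 8 * H ≤ θ) :
    ∀ j : ℕ, (j : ℝ) ≤ θ ^ 2 / 2 / (4 * S) →
      0 ≤ e j ∧ (θ ^ 2 / 4) * e j ≤ ((j : ℝ) + 1) * e (j + 1) := by
  intro j
  induction j using Nat.strong_induction_on with
  | _ j ih =>
  intro hj
  have hej : 0 ≤ e j := by
    rcases j with _ | j
    · exact he
    · have h1 := ih j (by omega) (le_trans (by push_cast; linarith) hj)
      have h2 : 0 ≤ ((j : ℝ) + 1) * e (j + 1) :=
        le_trans (mul_nonneg (by positivity) h1.1) h1.2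
      exact nonneg_of_mul_nonneg_right h2 (by positivity)
  refine ⟨hej, ?_⟩
  have hS0 : 0 < S := by linarith
  have hback : ∀ i ≤ j, e (j - i) ≤ (1 / (2 * S)) ^ i * e j := by
    intro i
    induction i with
    | zero => intro _; simp
    | succ i ihi =>
      intro hij
      have h0 := ihi (by omega)
      have hle : ((j - (i + 1) : ℕ) : ℝ) + 1 ≤ j := by
        exact_mod_cast (by omega : (j - (i + 1)) + 1 ≤ j)
      have h1 := ih (j - (i + 1)) (by omega) (by linarith)
      rw [show j - (i + 1) + 1 = j - i by omega] at h1
      have he' : 0 ≤ e (j - i) := by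
        have h2 := le_trans (mul_nonneg (by positivity) h1.1) h1.2
        exact nonneg_of_mul_nonneg_right h2 (by positivity)
      have h3 : θ ^ 2 / 4 * e (j - (i + 1)) ≤ (θ ^ 2 / 2 / (4 * S)) * e (j - i) :=
        h1.2.trans (mul_le_mul_of_nonneg_right (by linarith) he')
      have h4 : (θ ^ 2 / 2 / (4 * S)) * e (j - i) = θ ^ 2 / 4 * (1 / (2 * S) * e (j - i)) := by
        field_simp
      rw [h4] at h3
      have h5 := le_of_mul_le_mul_left h3 (by positivity)
      refine h5.trans ?_
      rw [pow_succ (1 / (2 * S))]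
      calc 1 / (2 * S) * e (j - i) ≤ 1 / (2 * S) * ((1 / (2 * S)) ^ i * e j) := by gcongr
        _ = _ := by ring
  have hpos : ∀ i ≤ j, 0 ≤ e (j - i) := by
    intro i hi
    rcases Nat.eq_zero_or_pos i with rfl | hi0
    · simpa using hej
    · refine (ih (j - i) (by omega) (le_trans ?_ hj)).1
      exact_mod_cast Nat.sub_le j i
  have hterm : ∀ i ∈ Finset.range (j + 1), |h i * e (j - i)| ≤ (H * e j) * (1 / 2) ^ i := by
    intro i hi
    have hij : i ≤ j := by simpa [Nat.lt_succ_iff] using hi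
    rw [abs_mul, abs_of_nonneg (hpos i hij)]
    calc |h i| * e (j - i) ≤ (H * S ^ i) * ((1 / (2 * S)) ^ i * e j) :=
          mul_le_mul (hh i) (hback i hij) (hpos i hij) (by positivity)
      _ = (H * e j) * (S * (1 / (2 * S))) ^ i := by rw [mul_pow]; ring
      _ = _ := by congr 2; field_simp
  have hsum : |∑ i ∈ Finset.range (j + 1), h i * e (j - i)| ≤ (H * e j) * 2 := by
    refine (Finset.abs_sum_le_sum_abs _ _).trans ((Finset.sum_le_sum hterm).trans ?_)
    rw [← Finset.mul_sum]
    exact mul_le_mul_of_nonneg_left (seq_geom _ (by norm_num) le_rfl _) (by positivity)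
  rw [hr j]
  have h6 := (abs_le.1 hsum).1
  have h7 : θ * (-(H * e j * 2)) ≤ θ * ∑ i ∈ Finset.range (j + 1), h i * e (j - i) :=
    mul_le_mul_of_nonneg_left h6 hθ0.le
  have h8 : θ * (H * e j * 2) ≤ θ ^ 2 / 4 * e j := by
    have : 0 ≤ (θ - 8 * H) * (θ * e j) := mul_nonneg (by linarith) (by positivity)
    nlinarith
  linarith

lemma seq_lower (H S : ℝ) (hH : 0 ≤ H) (hS : 1 ≤ S) : ∃ C > 0, ∀ θ : ℝ, 0 < θ → ∀ h e : ℕ → ℝ,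
    SeqRec (θ ^ 2 / 2) θ h e → (∀ i, |h i| ≤ H * S ^ i) → 0 ≤ e 0 → ∀ k : ℕ,
    -(e 0 * C ^ k) ≤ e k := by
  set L := 2 * S + 1 + 4 * H with hL
  set M0 := 1 + 4 * S + 32 * H ^ 2 with hM0
  have hLpos : 0 < L := by positivity
  have hM0pos : 0 < M0 := by positivity
  refine ⟨L * M0 * Real.exp 1, by positivity, ?_⟩
  intro θ hθ h e hr hh he k
  rcases Nat.eq_zero_or_pos k with rfl | hk
  · simp; linarith
  by_cases hc : 8 * H ≤ θ ∧ (k : ℝ) ≤ θ ^ 2 / 2 / (4 * S)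
  · have := (seq_sign θ H S hH hS h e hr hh he hθ hc.1 k hc.2).1
    refine le_trans ?_ this
    rw [neg_nonpos]; positivity
  · have hk1 : (1 : ℝ) ≤ k := by exact_mod_cast hk
    have hx : θ ^ 2 / 2 ≤ k * M0 := by
      rw [not_and_or] at hc
      rcases hc with hc | hc
      · push Not at hc
        have : θ ^ 2 / 2 ≤ 32 * H ^ 2 := by nlinarith
        calc θ ^ 2 / 2 ≤ 1 * M0 := by rw [hM0]; linarith
          _ ≤ _ := by gcongr
      · push Not at hc
        rw [div_lt_iff₀ (by positivity)] at hc
        refine hc.le.trans (mul_le_mul_of_nonneg_left ?_ (by positivity))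
        rw [hM0]; nlinarith [sq_nonneg H]
    have hM01 : 1 ≤ M0 := by rw [hM0]; nlinarith [sq_nonneg H]
    have := seq_size θ H S hθ.le hH hS h e hr hh he k (k * M0) (by nlinarith) (by nlinarith) hx k le_rfl
    refine le_trans ?_ (abs_le.1 this).1
    rw [neg_le_neg_iff]
    have h1 := Real.pow_div_factorial_le_exp (k : ℝ) (by positivity) k
    calc e 0 * (L * (k * M0)) ^ k / k ! = e 0 * (L * M0) ^ k * ((k : ℝ) ^ k / k !) := by
          rw [show L * (k * M0) = (L * M0) * k by ring, mul_pow (L * M0) (k : ℝ) k]; ring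
      _ ≤ e 0 * (L * M0) ^ k * Real.exp k := by gcongr
      _ = _ := by
          rw [mul_pow (L * M0), ← Real.exp_nat_mul, mul_one]; ring

lemma seq_upper (H S ρ : ℝ) (hH : 0 ≤ H) (hS : 1 ≤ S) (hρ : 0 < ρ) : ∃ C > 0, ∀ θ : ℝ, 0 < θ →
    ∀ h e : ℕ → ℝ,
    SeqRec (θ ^ 2 / 2) θ h e → (∀ i, |h i| ≤ H * S ^ i) → 0 ≤ e 0 → ∀ k : ℕ,
    |e k| ≤ e 0 * Real.exp (ρ * (θ ^ 2 / 2 + 1)) * C ^ k := by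
  set L := 2 * S + 1 + 4 * H with hL
  have hLpos : 0 < L := by positivity
  refine ⟨L / ρ * Real.exp ρ, by positivity, ?_⟩
  intro θ hθ h e hr hh he k
  set x := θ ^ 2 / 2 with hx
  have hx0 : 0 ≤ x := by positivity
  have := seq_size θ H S hθ.le hH hS h e hr hh he k (x + k + 1) (by linarith [(Nat.cast_nonneg k : (0:ℝ) ≤ k)])
    (by linarith) (by linarith [(Nat.cast_nonneg k : (0:ℝ) ≤ k)]) k le_rfl
  refine this.trans ?_
  have h1 := Real.pow_div_factorial_le_exp (ρ * (x + k + 1)) (by positivity) k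
  calc e 0 * (L * (x + k + 1)) ^ k / k ! = e 0 * (L / ρ) ^ k * ((ρ * (x + k + 1)) ^ k / k !) := by
        rw [show L * (x + k + 1) = (L / ρ) * (ρ * (x + k + 1)) by field_simp, mul_pow (L / ρ)]; ring
    _ ≤ e 0 * (L / ρ) ^ k * Real.exp (ρ * (x + k + 1)) := by gcongr
    _ = _ := by
        rw [mul_pow (L / ρ), ← Real.exp_nat_mul,
          show ρ * (x + k + 1) = ρ * (x + 1) + k * ρ by ring, Real.exp_add]; ring

end SeqBounds

section AnBounds
open Nat

lemma an_local (c : ℝ → ℝ) (x : ℝ) (hc : AnalyticAt ℝ c x) :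
    ∃ H S : ℝ, 0 ≤ H ∧ 1 ≤ S ∧ ∀ᶠ s in 𝓝 x, ∀ i : ℕ, |iteratedDeriv i c s| ≤ H * S ^ i * i ! := by
  obtain ⟨p, R, hp⟩ := hc
  obtain ⟨r, hr0, hr⟩ : ∃ r : ℝ≥0, 0 < r ∧ (r + r : ℝ≥0∞) < R := by
    obtain ⟨q, hq0, hq⟩ := ENNReal.lt_iff_exists_nnreal_btwn.1 hp.r_pos
    refine ⟨q / 2, by
      have : (0 : ℝ≥0) < q := by exact_mod_cast hq0
      positivity, ?_⟩
    rw [← ENNReal.coe_add, add_halves]; exact hq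
  have hrr : (r : ℝ≥0∞) < R := lt_of_le_of_lt (by exact le_self_add) hr
  have hsum := p.changeOriginSeries_summable_aux₁ (r := r) (r' := r) (hr.trans_le hp.r_le)
  set T := ∑' s : Σ k l : ℕ, { s : Finset (Fin (k + l)) // s.card = l },
      ‖p (s.1 + s.2.1)‖₊ * r ^ s.2.1 * r ^ s.1 with hT
  refine ⟨T, max 1 (r : ℝ)⁻¹, T.2, le_max_left _ _, ?_⟩
  have hball : Metric.ball x r ∈ 𝓝 x := Metric.ball_mem_nhds _ (by exact_mod_cast hr0)
  filter_upwards [hball] with s hs i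
  set y := s - x with hy
  have hyr : ‖y‖₊ ≤ r := by
    rw [Metric.mem_ball, dist_eq_norm] at hs
    exact_mod_cast hs.le
  have hyR : (‖y‖₊ : ℝ≥0∞) < R := lt_of_le_of_lt (by exact_mod_cast hyr) hrr
  have h1 := hp.changeOrigin hyR
  rw [show x + y = s by rw [hy]; ring] at h1
  have h2 := h1.factorial_smul 1 i
  rw [iteratedDeriv_eq_iteratedFDeriv, ← h2, nsmul_eq_mul, abs_mul, abs_of_nonneg (by positivity)]
  have h3 : |p.changeOrigin y i fun _ => 1| ≤ ‖p.changeOrigin y i‖ := by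
    simpa using (p.changeOrigin y i).le_opNorm (fun _ => 1)
  have h4 : ‖p.changeOrigin y i‖₊ * r ^ i ≤ T := by
    have h5 := p.nnnorm_changeOrigin_le i (hyR.trans_le hp.r_le)
    have hs1 := NNReal.summable_sigma.1 hsum
    have hs2 := hs1.1 i
    calc ‖p.changeOrigin y i‖₊ * r ^ i
        ≤ (∑' s : Σ l : ℕ, { s : Finset (Fin (i + l)) // s.card = l }, ‖p (i + s.1)‖₊ * ‖y‖₊ ^ s.1) * r ^ i := by
          gcongr
      _ = (∑' s : Σ l : ℕ, { s : Finset (Fin (i + l)) // s.card = l }, ‖p (i + s.1)‖₊ * ‖y‖₊ ^ s.1 * r ^ i) := by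
          rw [NNReal.tsum_mul_right]
      _ ≤ (∑' s : Σ l : ℕ, { s : Finset (Fin (i + l)) // s.card = l }, ‖p (i + s.1)‖₊ * r ^ s.1 * r ^ i) := by
          refine Summable.tsum_le_tsum (fun s => ?_) (NNReal.summable_of_le (fun s => ?_) hs2) hs2
          · gcongr
          · gcongr
      _ ≤ T := by
          exact NNReal.tsum_comp_le_tsum_of_inj hsum
            (i := fun s : (Σ l : ℕ, { s : Finset (Fin (i + l)) // s.card = l }) =>
              (⟨i, s⟩ : Σ k l : ℕ, { s : Finset (Fin (k + l)) // s.card = l }))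
            (fun a b hab => by simpa using hab)
  have h6 : ‖p.changeOrigin y i‖ * (r : ℝ) ^ i ≤ T := by exact_mod_cast h4
  have hr0' : (0 : ℝ) < r := by exact_mod_cast hr0
  have h7 : ‖p.changeOrigin y i‖ ≤ T * ((r : ℝ)⁻¹) ^ i := by
    rw [inv_pow, ← div_eq_mul_inv, le_div_iff₀ (by positivity)]; exact h6
  have h8 : ((r : ℝ)⁻¹) ^ i ≤ (max 1 (r : ℝ)⁻¹) ^ i := pow_le_pow_left₀ (by positivity) (le_max_right _ _) _
  calc (i ! : ℝ) * |p.changeOrigin y i fun _ => 1| ≤ i ! * (T * (max 1 (r : ℝ)⁻¹) ^ i) := by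
        gcongr
        exact h3.trans (h7.trans (mul_le_mul_of_nonneg_left h8 T.2))
    _ = _ := by ring

lemma an_compact (c : ℝ → ℝ) (J : Set ℝ) (hJ : IsCompact J) (hc : AnalyticOnNhd ℝ c J) :
    ∃ H S : ℝ, 0 ≤ H ∧ 1 ≤ S ∧ ∀ s ∈ J, ∀ i : ℕ, |iteratedDeriv i c s| ≤ H * S ^ i * i ! := by
  refine hJ.induction_on (p := fun J => ∃ H S : ℝ, 0 ≤ H ∧ 1 ≤ S ∧ ∀ s ∈ J, ∀ i : ℕ,
    |iteratedDeriv i c s| ≤ H * S ^ i * i !) ?_ ?_ ?_ ?_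
  · exact ⟨0, 1, le_rfl, le_rfl, by simp⟩
  · rintro s t hst ⟨H, S, h1, h2, h3⟩
    exact ⟨H, S, h1, h2, fun x hx => h3 x (hst hx)⟩
  · rintro s t ⟨H, S, h1, h2, h3⟩ ⟨H', S', h1', h2', h3'⟩
    refine ⟨max H H', max S S', le_max_of_le_left h1, le_max_of_le_left h2, ?_⟩
    rintro x (hx | hx) i
    · refine (h3 x hx i).trans ?_
      gcongr
      · exact le_max_left _ _
      · exact le_max_left _ _
    · refine (h3' x hx i).trans ?_
      gcongr
      · exact le_max_right _ _
      · exact le_max_right _ _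
  · intro x hx
    obtain ⟨H, S, h1, h2, h3⟩ := an_local c x (hc x hx)
    exact ⟨_, mem_nhdsWithin_of_mem_nhds h3, H, S, h1, h2, fun s hs => hs⟩

noncomputable def phi (c : ℝ → ℝ) (s0 θ s : ℝ) : ℝ :=
  Real.exp (-(s - s0) * (θ ^ 2 / 2) + θ * (c s - c s0))

lemma phi_pos (c : ℝ → ℝ) (s0 θ s : ℝ) : 0 < phi c s0 θ s := Real.exp_pos _

lemma phi_analytic (c : ℝ → ℝ) (hc : AnalyticOnNhd ℝ c (Ioi 0)) (s0 θ s : ℝ) (hs : 0 < s) :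
    AnalyticAt ℝ (phi c s0 θ) s := by
  have := hc s hs
  unfold phi
  fun_prop

lemma phi_hasDerivAt (c : ℝ → ℝ) (hc : AnalyticOnNhd ℝ c (Ioi 0)) (s0 θ s : ℝ) (hs : 0 < s) (k : ℕ) :
    HasDerivAt (iteratedDeriv k (phi c s0 θ)) (iteratedDeriv (k + 1) (phi c s0 θ) s) s := by
  rw [iteratedDeriv_succ]
  refine DifferentiableAt.hasDerivAt ?_
  rw [iteratedDeriv_eq_iterate]
  exact ((phi_analytic c hc s0 θ s hs).iterated_deriv k).differentiableAt

lemma phi_rec (c : ℝ → ℝ) (hc : AnalyticOnNhd ℝ c (Ioi 0)) (s0 θ s : ℝ) (hs : 0 < s) (k : ℕ) :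
    iteratedDeriv (k + 1) (phi c s0 θ) s = -(θ ^ 2 / 2) * iteratedDeriv k (phi c s0 θ) s +
      θ * ∑ i ∈ Finset.range (k + 1),
        k.choose i * iteratedDeriv (i + 1) c s * iteratedDeriv (k - i) (phi c s0 θ) s := by
  have hev : deriv (phi c s0 θ) =ᶠ[𝓝 s] fun u => -(θ ^ 2 / 2) * phi c s0 θ u + θ * (deriv c u * phi c s0 θ u) := by
    filter_upwards [Ioi_mem_nhds hs] with u hu
    have h1 : HasDerivAt c (deriv c u) u := (hc u hu).differentiableAt.hasDerivAt
    have h2 := (((((hasDerivAt_id u).sub_const s0).neg).mul_const (θ ^ 2 / 2)).add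
      ((h1.sub_const (c s0)).const_mul θ)).exp
    have h3 : deriv (phi c s0 θ) u = _ := h2.deriv
    rw [h3]
    simp only [phi, id]
    simp
    ring
  have hφ := phi_analytic c hc s0 θ s hs
  have hdc : AnalyticAt ℝ (deriv c) s := (hc s hs).deriv
  rw [iteratedDeriv_succ', hev.iteratedDeriv_eq, iteratedDeriv_fun_add (by
      exact (analyticAt_const.mul hφ).contDiffAt) (by
      exact (analyticAt_const.mul (hdc.mul hφ)).contDiffAt),
    iteratedDeriv_const_mul_field, iteratedDeriv_const_mul_field,
    iteratedDeriv_fun_mul hdc.contDiffAt hφ.contDiffAt]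
  simp only [iteratedDeriv_succ']

lemma phi_seqRec (c : ℝ → ℝ) (hc : AnalyticOnNhd ℝ c (Ioi 0)) (s0 θ s : ℝ) (hs : 0 < s) :
    SeqRec (θ ^ 2 / 2) θ (fun i => (-1) ^ (i + 1) * (iteratedDeriv (i + 1) c s / i !))
      (fun k => (-1) ^ k * (iteratedDeriv k (phi c s0 θ) s / k !)) := by
  intro k
  simp only
  rw [phi_rec c hc s0 θ s hs k]
  have hk : (k ! : ℝ) ≠ 0 := by positivity
  have hsum : ∑ i ∈ Finset.range (k + 1),
      (-1) ^ (i + 1) * (iteratedDeriv (i + 1) c s / i !) *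
        ((-1) ^ (k - i) * (iteratedDeriv (k - i) (phi c s0 θ) s / (k - i)!)) =
      (-1) ^ (k + 1) / k ! * ∑ i ∈ Finset.range (k + 1),
        k.choose i * iteratedDeriv (i + 1) c s * iteratedDeriv (k - i) (phi c s0 θ) s := by
    rw [Finset.mul_sum]
    refine Finset.sum_congr rfl fun i hi => ?_
    have hik : i ≤ k := by simpa [Nat.lt_succ_iff] using hi
    rw [Nat.cast_choose ℝ hik]
    have h1 : (-1 : ℝ) ^ (k + 1) = (-1) ^ (i + 1) * (-1) ^ (k - i) := by
      rw [← pow_add]; congr 1; omega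
    rw [h1]
    have hi0 : (i ! : ℝ) ≠ 0 := by positivity
    have hki0 : ((k - i)! : ℝ) ≠ 0 := by positivity
    field_simp
  rw [hsum, Nat.factorial_succ]
  push_cast
  have hk1 : (k : ℝ) + 1 ≠ 0 := by positivity
  rw [pow_succ (-1 : ℝ) k]
  field_simp
  ring

lemma phi_hbound (c : ℝ → ℝ) (s H S : ℝ) (hH : 0 ≤ H) (hS : 1 ≤ S)
    (hb : ∀ i : ℕ, |iteratedDeriv i c s| ≤ H * S ^ i * i !) (i : ℕ) :
    |(-1) ^ (i + 1) * (iteratedDeriv (i + 1) c s / i !)| ≤ (H * S) * (2 * S) ^ i := by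
  rw [abs_mul, abs_pow, abs_neg, abs_one, one_pow, one_mul, abs_div,
    abs_of_nonneg (by positivity : (0 : ℝ) ≤ i !), div_le_iff₀ (by positivity)]
  refine (hb (i + 1)).trans ?_
  have h2 : ((i : ℝ) + 1) ≤ 2 ^ i := by exact_mod_cast Nat.lt_two_pow_self (n := i)
  rw [Nat.factorial_succ, mul_pow, pow_succ S i]
  push_cast
  calc H * (S ^ i * S) * (((i : ℝ) + 1) * i !) = (H * S * S ^ i * i !) * ((i : ℝ) + 1) := by ring
    _ ≤ (H * S * S ^ i * i !) * 2 ^ i := by gcongr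
    _ = _ := by ring

/-- Lower bound near `s0`. -/
lemma phi_lower (c : ℝ → ℝ) (hc : AnalyticOnNhd ℝ c (Ioi 0)) (s0 s1 : ℝ) (hs0 : 0 < s0) :
    ∃ C > 0, ∀ θ > 0, ∀ s ∈ Icc s0 s1, ∀ k : ℕ,
      -(phi c s0 θ s * C ^ k * k !) ≤ (-1) ^ k * iteratedDeriv k (phi c s0 θ) s := by
  obtain ⟨H, S, hH, hS, hb⟩ := an_compact c (Icc s0 s1) isCompact_Icc
    (fun s hs => hc s (hs0.trans_le hs.1))
  have hHS : 0 ≤ H * S := by positivity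
  obtain ⟨C, hC, h⟩ := seq_lower (H * S) (2 * S) hHS (by linarith)
  refine ⟨C, hC, fun θ hθ s hs k => ?_⟩
  have hspos := hs0.trans_le hs.1
  have := h θ hθ _ _ (phi_seqRec c hc s0 θ s hspos) (phi_hbound c s H S hH hS (hb s hs))
    (by simpa using (phi_pos c s0 θ s).le) k
  simp only [pow_zero, iteratedDeriv_zero, one_mul, Nat.factorial_zero, Nat.cast_one, div_one] at this
  have h2 := mul_le_mul_of_nonneg_right this (by positivity : (0 : ℝ) ≤ k !)
  have hk : (k ! : ℝ) ≠ 0 := by positivity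
  calc -(phi c s0 θ s * C ^ k * k !) = -(phi c s0 θ s * C ^ k) * k ! := by ring
    _ ≤ _ := h2
    _ = _ := by field_simp

lemma c_lip (c : ℝ → ℝ) (hc : AnalyticOnNhd ℝ c (Ioi 0)) (s0 s1 : ℝ) (hs0 : 0 < s0) (h01 : s0 ≤ s1) :
    ∃ K ≥ 0, ∀ s ∈ Icc s0 s1, |c s - c s0| ≤ K * (s - s0) := by
  obtain ⟨H, S, hH, hS, hb⟩ := an_compact c (Icc s0 s1) isCompact_Icc
    (fun s hs => hc s (hs0.trans_le hs.1))
  refine ⟨H * S, by positivity, fun s hs => ?_⟩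
  have := (convex_Icc s0 s1).norm_image_sub_le_of_norm_deriv_le (f := c) (C := H * S)
    (fun x hx => (hc x (hs0.trans_le hx.1)).differentiableAt)
    (fun x hx => by simpa using hb x hx 1) (left_mem_Icc.2 h01) hs
  simpa [abs_of_nonneg (sub_nonneg.2 hs.1)] using this

lemma phi_le (c : ℝ → ℝ) (hc : AnalyticOnNhd ℝ c (Ioi 0)) (s0 s1 : ℝ) (hs0 : 0 < s0) (h01 : s0 ≤ s1) :
    ∃ A > 0, ∀ θ > 0, ∀ s ∈ Icc s0 s1, phi c s0 θ s ≤ A * Real.exp (-((s - s0) / 2) * (θ ^ 2 / 2)) := by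
  obtain ⟨K, hK, hb⟩ := c_lip c hc s0 s1 hs0 h01
  refine ⟨Real.exp (K ^ 2 * (s1 - s0)), Real.exp_pos _, fun θ hθ s hs => ?_⟩
  rw [phi, ← Real.exp_add, Real.exp_le_exp]
  have h1 := (abs_le.1 (hb s hs)).2
  have h2 : θ * (c s - c s0) ≤ θ * (K * (s - s0)) := mul_le_mul_of_nonneg_left h1 hθ.le
  have h3 : 0 ≤ s - s0 := by linarith [hs.1]
  have h4 : K ^ 2 * (s - s0) ≤ K ^ 2 * (s1 - s0) := by
    apply mul_le_mul_of_nonneg_left (by linarith [hs.2]) (by positivity)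
  nlinarith [mul_nonneg h3 (sq_nonneg (K - θ / 2))]

/-- Two-sided bound away from `s0`. -/
lemma phi_upper (c : ℝ → ℝ) (hc : AnalyticOnNhd ℝ c (Ioi 0)) (s0 α β : ℝ) (hs0 : 0 < s0) (hα : s0 < α)
    (hαβ : α ≤ β) :
    ∃ A > 0, ∃ C > 0, ∀ θ > 0, ∀ s ∈ Icc α β, ∀ k : ℕ,
      |iteratedDeriv k (phi c s0 θ) s| ≤ A * C ^ k * k ! := by
  obtain ⟨H, S, hH, hS, hb⟩ := an_compact c (Icc α β) isCompact_Icc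
    (fun s hs => hc s (hs0.trans (hα.trans_le hs.1)))
  have hHS : 0 ≤ H * S := by positivity
  obtain ⟨A, hA, hphi⟩ := phi_le c hc s0 β hs0 (hα.le.trans hαβ)
  set ρ := (α - s0) / 2 with hρ
  have hρ0 : 0 < ρ := by rw [hρ]; linarith
  obtain ⟨C, hC, h⟩ := seq_upper (H * S) (2 * S) ρ hHS (by linarith) hρ0
  refine ⟨A * Real.exp ρ, by positivity, C, hC, fun θ hθ s hs k => ?_⟩
  have hspos := hs0.trans (hα.trans_le hs.1)
  have := h θ hθ _ _ (phi_seqRec c hc s0 θ s hspos) (phi_hbound c s H S hH hS (hb s hs))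
    (by simpa using (phi_pos c s0 θ s).le) k
  simp only [pow_zero, iteratedDeriv_zero, one_mul, Nat.factorial_zero, Nat.cast_one, div_one,
    abs_mul, abs_pow, abs_neg, abs_one, one_pow, abs_div] at this
  rw [abs_of_nonneg (by positivity : (0 : ℝ) ≤ k !), div_le_iff₀ (by positivity)] at this
  refine this.trans ?_
  have h1 : phi c s0 θ s * Real.exp (ρ * (θ ^ 2 / 2 + 1)) ≤ A * Real.exp ρ := by
    calc phi c s0 θ s * Real.exp (ρ * (θ ^ 2 / 2 + 1))
        ≤ (A * Real.exp (-((s - s0) / 2) * (θ ^ 2 / 2))) * Real.exp (ρ * (θ ^ 2 / 2 + 1)) := by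
          gcongr
          exact hphi θ hθ s ⟨(hα.trans_le hs.1).le, hs.2⟩
      _ = A * Real.exp (-((s - s0) / 2) * (θ ^ 2 / 2) + ρ * (θ ^ 2 / 2 + 1)) := by
          rw [Real.exp_add]; ring
      _ ≤ _ := by
          gcongr
          have : ρ ≤ (s - s0) / 2 := by rw [hρ]; linarith [hs.1]
          nlinarith [mul_le_mul_of_nonneg_right this (by positivity : 0 ≤ θ ^ 2 / 2)]
  gcongr

lemma phi_meas (c : ℝ → ℝ) (hc : AnalyticOnNhd ℝ c (Ioi 0)) (s0 s : ℝ) (hs : 0 < s) (k : ℕ) :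
    Measurable (fun θ => iteratedDeriv k (phi c s0 θ) s) := by
  induction k using Nat.strong_induction_on with
  | _ k ih =>
  rcases k with _ | k
  · simp only [iteratedDeriv_zero, phi]; fun_prop
  · have : (fun θ => iteratedDeriv (k + 1) (phi c s0 θ) s) = fun θ =>
      -(θ ^ 2 / 2) * iteratedDeriv k (phi c s0 θ) s +
      θ * ∑ i ∈ Finset.range (k + 1),
        k.choose i * iteratedDeriv (i + 1) c s * iteratedDeriv (k - i) (phi c s0 θ) s := by
      funext θ; exact phi_rec c hc s0 θ s hs k
    rw [this]
    have h1 := ih k (by omega)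
    have h2 : ∀ i ∈ Finset.range (k + 1), Measurable fun θ =>
        k.choose i * iteratedDeriv (i + 1) c s * iteratedDeriv (k - i) (phi c s0 θ) s :=
      fun i _ => (ih (k - i) (by omega)).const_mul _
    have h3 := Finset.measurable_fun_sum (Finset.range (k + 1)) h2
    fun_prop

end AnBounds

section FConst
open Nat

noncomputable def FF (c : ℝ → ℝ) (s0 : ℝ) (ν : Measure ℝ) (k : ℕ) (s : ℝ) : ℝ :=
  (∫ θ, iteratedDeriv k (phi c s0 θ) s ∂ν) - (if k = 0 then 1 else 0)

lemma phi_integrable (c : ℝ → ℝ) (hc : AnalyticOnNhd ℝ c (Ioi 0)) (s0 s : ℝ) (hs0 : 0 < s0) (hs : s0 < s)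
    (ν : Measure ℝ) [IsFiniteMeasure ν] (hν : ∀ᵐ θ ∂ν, 0 < θ) (k : ℕ) :
    Integrable (fun θ => iteratedDeriv k (phi c s0 θ) s) ν := by
  obtain ⟨A, hA, C, hC, h⟩ := phi_upper c hc s0 s s hs0 hs le_rfl
  refine Integrable.of_bound (phi_meas c hc s0 s (hs0.trans hs) k).aestronglyMeasurable (A * C ^ k * k !) ?_
  filter_upwards [hν] with θ hθ
  exact h θ hθ s ⟨le_rfl, le_rfl⟩ k

lemma FF_hasDerivAt (c : ℝ → ℝ) (hc : AnalyticOnNhd ℝ c (Ioi 0)) (s0 s : ℝ) (hs0 : 0 < s0) (hs : s0 < s)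
    (ν : Measure ℝ) [IsFiniteMeasure ν] (hν : ∀ᵐ θ ∂ν, 0 < θ) (k : ℕ) :
    HasDerivAt (FF c s0 ν k) (FF c s0 ν (k + 1) s) s := by
  obtain ⟨A, hA, C, hC, h⟩ := phi_upper c hc s0 ((s0 + s) / 2) (s + 1) hs0 (by linarith) (by linarith)
  have hnh : Ioo ((s0 + s) / 2) (s + 1) ∈ 𝓝 s := Ioo_mem_nhds (by linarith) (by linarith)
  have hpos : ∀ u ∈ Ioo ((s0 + s) / 2) (s + 1), s0 < u := fun u hu => by linarith [hu.1]
  have := (hasDerivAt_integral_of_dominated_loc_of_deriv_le (μ := ν) (𝕜 := ℝ)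
    (F := fun s θ => iteratedDeriv k (phi c s0 θ) s)
    (F' := fun s θ => iteratedDeriv (k + 1) (phi c s0 θ) s) (x₀ := s)
    (bound := fun _ => A * C ^ (k + 1) * (k + 1)!) hnh
    (by filter_upwards [hnh] with u hu
        exact (phi_meas c hc s0 u (hs0.trans (hpos u hu)) k).aestronglyMeasurable)
    (phi_integrable c hc s0 s hs0 hs ν hν k)
    (phi_meas c hc s0 s (hs0.trans hs) (k + 1)).aestronglyMeasurable
    (by filter_upwards [hν] with θ hθ u hu
        exact h θ hθ u ⟨hu.1.le, hu.2.le⟩ (k + 1))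
    (integrable_const _)
    (by filter_upwards with θ u hu
        exact phi_hasDerivAt c hc s0 θ u (hs0.trans (hpos u hu)) k)).2
  have h2 := this.sub_const (if k = 0 then (1 : ℝ) else 0)
  have e : FF c s0 ν (k + 1) s = ∫ θ, iteratedDeriv (k + 1) (phi c s0 θ) s ∂ν := by simp [FF]
  rw [e]
  exact h2

lemma FF_near (c : ℝ → ℝ) (hc : AnalyticOnNhd ℝ c (Ioi 0)) (s0 : ℝ) (hs0 : 0 < s0)
    (ν : Measure ℝ) [IsFiniteMeasure ν] (hν : ∀ᵐ θ ∂ν, 0 < θ)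
    (hz : ∃ᶠ s in 𝓝[>] s0, FF c s0 ν 0 s = 0) :
    ∃ r > 0, ∀ s ∈ Ioo s0 (s0 + r), FF c s0 ν 0 s = 0 := by
  obtain ⟨C, hC, h⟩ := phi_lower c hc s0 (s0 + 1) hs0
  obtain ⟨A, hA, hA'⟩ := phi_le c hc s0 (s0 + 1) hs0 (by linarith)
  refine famA s0 (s0 + 1) (A * ν.real univ + 1) C (by linarith) (by positivity) hC (FF c s0 ν)
    (fun k s hs => FF_hasDerivAt c hc s0 s hs0 hs.1 ν hν k) hz ?_
  intro k s hs
  have h1 : -(A * ν.real univ * C ^ k * k !) ≤ (-1) ^ k * ∫ θ, iteratedDeriv k (phi c s0 θ) s ∂ν := by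
    rw [← integral_const_mul]
    have h2 : ∫ θ, -(A * C ^ k * k !) ∂ν ≤ ∫ θ, (-1) ^ k * iteratedDeriv k (phi c s0 θ) s ∂ν := by
      refine integral_mono_ae (integrable_const _)
        ((phi_integrable c hc s0 s hs0 hs.1 ν hν k).const_mul _) ?_
      filter_upwards [hν] with θ hθ
      have hs' : s ∈ Icc s0 (s0 + 1) := ⟨hs.1.le, hs.2.le⟩
      refine le_trans ?_ (h θ hθ s hs' k)
      have h3 : phi c s0 θ s ≤ A := by
        refine (hA' θ hθ s hs').trans ?_
        have : Real.exp (-((s - s0) / 2) * (θ ^ 2 / 2)) ≤ 1 := by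
          rw [Real.exp_le_one_iff]
          have := hs.1
          have : 0 ≤ (s - s0) / 2 * (θ ^ 2 / 2) := mul_nonneg (by linarith) (by positivity)
          linarith
        nlinarith
      rw [neg_le_neg_iff]
      gcongr
    rw [integral_const, smul_eq_mul] at h2
    linarith
  rw [FF, mul_sub]
  have hpos : 0 ≤ C ^ k * k ! := by positivity
  split_ifs with hk
  · subst hk
    simp at h1 ⊢
    linarith
  · nlinarith

lemma FF_all (c : ℝ → ℝ) (hc : AnalyticOnNhd ℝ c (Ioi 0)) (s0 : ℝ) (hs0 : 0 < s0)
    (ν : Measure ℝ) [IsFiniteMeasure ν] (hν : ∀ᵐ θ ∂ν, 0 < θ)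
    (hz : ∃ᶠ s in 𝓝[>] s0, FF c s0 ν 0 s = 0) :
    ∀ s > s0, FF c s0 ν 0 s = 0 := by
  obtain ⟨r, hr, hnear⟩ := FF_near c hc s0 hs0 ν hν hz
  intro u hu
  set α := s0 + r / 2 with hα
  set β := u + r + 1 with hβ
  obtain ⟨A, hA, C, hC, h⟩ := phi_upper c hc s0 α β hs0 (by linarith) (by linarith)
  have hb : ∀ k, ∀ s ∈ Ioo α β, |FF c s0 ν k s| ≤ (A * ν.real univ + 1) * C ^ k * k ! := by
    intro k s hs
    have h1 : |∫ θ, iteratedDeriv k (phi c s0 θ) s ∂ν| ≤ (A * C ^ k * k !) * ν.real univ := by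
      rw [← Real.norm_eq_abs]
      refine norm_integral_le_of_norm_le_const (μ := ν) ?_
      filter_upwards [hν] with θ hθ
      exact h θ hθ s ⟨hs.1.le, hs.2.le⟩ k
    have hpos : 0 ≤ C ^ k * k ! := by positivity
    rw [FF]
    split_ifs with hk
    · subst hk
      refine (abs_sub _ _).trans ?_
      simp at h1 ⊢
      linarith
    · rw [sub_zero]; nlinarith
  have hstep : ∀ n : ℕ, ∀ s ∈ Ioo s0 β, s < α + r / 2 + n * (1 / (2 * C)) → FF c s0 ν 0 s = 0 := by
    intro n
    induction n with
    | zero =>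
      intro s hs hs'
      exact hnear s ⟨hs.1, by simp at hs'; linarith⟩
    | succ n ih =>
      intro s hs hs'
      have hCi : 0 < 1 / (2 * C) := by positivity
      have hn : 0 ≤ (n : ℝ) * (1 / (2 * C)) := by positivity
      push_cast at hs'
      by_cases hsα : s ≤ α
      · exact ih s hs (by linarith)
      push Not at hsα
      set p := max α (s - 3 / 2 * (1 / (2 * C))) with hp
      have hpα : α ≤ p := le_max_left _ _
      have hps : p < s := max_lt hsα (by linarith)
      have hpn : p < α + r / 2 + n * (1 / (2 * C)) := max_lt (by linarith) (by linarith)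
      refine famB p β (A * ν.real univ + 1) C (by linarith [hs.2]) (by positivity) hC (FF c s0 ν)
        (fun k w hw => FF_hasDerivAt c hc s0 w hs0 (by linarith [hw.1]) ν hν k) ?_
        (fun k w hw => hb k w ⟨by linarith [hw.1], hw.2⟩) s ⟨hps, hs.2⟩ ?_
      · apply Eventually.frequently
        filter_upwards [Ioo_mem_nhdsGT hpn, Ioo_mem_nhdsGT (hps.trans hs.2)] with w hw hw2
        exact ih w ⟨by linarith [hw.1], hw2.2⟩ hw.2
      · have h1 : s - 3 / 2 * (1 / (2 * C)) ≤ p := le_max_right _ _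
        have h2 : C * (s - p) ≤ C * (3 / 2 * (1 / (2 * C))) := by gcongr; linarith
        have h3 : C * (3 / 2 * (1 / (2 * C))) = 3 / 4 := by field_simp; norm_num
        linarith
  obtain ⟨n, hn⟩ := exists_nat_gt (u / (1 / (2 * C)))
  rw [div_lt_iff₀ (by positivity)] at hn
  exact hstep n u ⟨hu, by linarith⟩ (by linarith)

end FConst

section Entire

lemma entire_diff (lam : Measure ℝ) [IsFiniteMeasure lam] (κ β : ℝ → ℝ) (hκ : Measurable κ)
    (hβ : Measurable β) (K B : ℝ) (hK : ∀ᵐ t ∂lam, |κ t| ≤ K) (hB : ∀ᵐ t ∂lam, |β t| ≤ B) :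
    Differentiable ℂ (fun z : ℂ => ∫ t, Complex.exp (-(z ^ 2 / 2) * κ t + z * β t) ∂lam) := by
  intro z0
  set R := ‖z0‖ + 1 with hR
  have hR0 : 0 ≤ R := by positivity
  have hnorm : ∀ z ∈ Metric.ball z0 1, ‖z‖ ≤ R := by
    intro z hz
    rw [Metric.mem_ball, dist_eq_norm] at hz
    have := norm_le_norm_add_norm_sub' z z0
    linarith
  have hexp : ∀ z : ℂ, ‖z‖ ≤ R → ∀ k l : ℝ, |k| ≤ K → |l| ≤ B →
      ‖Complex.exp (-(z ^ 2 / 2) * k + z * l)‖ ≤ Real.exp (R ^ 2 / 2 * K + R * B) := by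
    intro z hz k l hk hl
    have hK0 : 0 ≤ K := (abs_nonneg _).trans hk
    rw [Complex.norm_exp, Real.exp_le_exp]
    refine (Complex.re_le_norm _).trans ((norm_add_le _ _).trans ?_)
    simp only [norm_mul, norm_neg, norm_div, norm_pow, Complex.norm_real, Real.norm_eq_abs,
      Complex.norm_ofNat]
    gcongr
  have hmeas : ∀ z : ℂ, AEStronglyMeasurable (fun t => Complex.exp (-(z ^ 2 / 2) * κ t + z * β t)) lam := by
    intro z
    apply Measurable.aestronglyMeasurable
    fun_prop
  refine (hasDerivAt_integral_of_dominated_loc_of_deriv_le (μ := lam) (𝕜 := ℂ)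
    (F := fun z t => Complex.exp (-(z ^ 2 / 2) * κ t + z * β t))
    (F' := fun z t => Complex.exp (-(z ^ 2 / 2) * κ t + z * β t) * (-z * κ t + β t)) (x₀ := z0)
    (bound := fun _ => Real.exp (R ^ 2 / 2 * K + R * B) * (R * K + B))
    (Metric.ball_mem_nhds z0 one_pos) ?_ ?_ ?_ ?_ (integrable_const _) ?_).2.differentiableAt
  · exact Eventually.of_forall hmeas
  · refine Integrable.of_bound (hmeas z0) (Real.exp (R ^ 2 / 2 * K + R * B)) ?_
    filter_upwards [hK, hB] with t h1 h2
    exact hexp z0 (by linarith) _ _ h1 h2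
  · apply Measurable.aestronglyMeasurable
    fun_prop
  · filter_upwards [hK, hB] with t h1 h2 z hz
    have hK0 : 0 ≤ K := (abs_nonneg _).trans h1
    rw [norm_mul]
    refine mul_le_mul (hexp z (hnorm z hz) _ _ h1 h2) ?_ (norm_nonneg _) (Real.exp_pos _).le
    refine (norm_add_le _ _).trans ?_
    simp only [norm_mul, norm_neg, Complex.norm_real, Real.norm_eq_abs]
    have := hnorm z hz
    gcongr
  · filter_upwards with t z hz
    have h := (((((hasDerivAt_id z).pow 2).div_const 2).neg.mul_const (κ t : ℂ)).add
      ((hasDerivAt_id z).mul_const (β t : ℂ))).cexp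
    convert! h using 1
    have e : (-(((2 : ℕ) : ℂ) * id z ^ (2 - 1) * 1 / 2) * (κ t : ℂ) + 1 * (β t : ℂ)) = -z * κ t + β t := by
      rw [id_eq]; norm_num
    rw [e]
    rfl

lemma entire_zero (lam : Measure ℝ) [IsFiniteMeasure lam] (κ β : ℝ → ℝ) (hκ : Measurable κ)
    (hβ : Measurable β) (K C δ : ℝ) (hδ : 0 < δ) (hC : 0 ≤ C) (hK : ∀ᵐ t ∂lam, 0 ≤ κ t ∧ κ t ≤ K)
    (hB : ∀ᵐ t ∂lam, |β t| ≤ C * κ t) (a : ℝ) :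
    ∀ᶠ θ in 𝓝[≠] a, ∫ t, Real.exp (-(θ ^ 2 / 2) * κ t + θ * β t) ∂lam ≠ Real.exp (-δ * θ) := by
  by_contra hcon
  have hcon : ∃ᶠ θ in 𝓝[≠] a, ∫ t, Real.exp (-(θ ^ 2 / 2) * κ t + θ * β t) ∂lam = Real.exp (-δ * θ) := by
    exact hcon
  have hd := entire_diff lam κ β hκ hβ K (C * K)
    (by filter_upwards [hK] with t ht; rw [abs_of_nonneg ht.1]; exact ht.2)
    (by filter_upwards [hK, hB] with t ht h2
        exact h2.trans (mul_le_mul_of_nonneg_left ht.2 hC))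
  have hd2 : Differentiable ℂ (fun z : ℂ => Complex.exp (-δ * z)) := by fun_prop
  have hre : ∀ θ : ℝ, ∫ t, Complex.exp (-((θ : ℂ) ^ 2 / 2) * κ t + θ * β t) ∂lam =
      ((∫ t, Real.exp (-(θ ^ 2 / 2) * κ t + θ * β t) ∂lam : ℝ) : ℂ) := by
    intro θ
    rw [← integral_complex_ofReal]
    congr 1
    funext t
    push_cast
    rfl
  have htend : Tendsto (fun θ : ℝ => (θ : ℂ)) (𝓝[≠] a) (𝓝[≠] (a : ℂ)) := by
    refine tendsto_nhdsWithin_iff.2 ⟨(Complex.continuous_ofReal.tendsto a).mono_left nhdsWithin_le_nhds, ?_⟩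
    filter_upwards [self_mem_nhdsWithin] with θ hθ
    simpa using hθ
  have hfreq : ∃ᶠ z in 𝓝[≠] (a : ℂ), (∫ t, Complex.exp (-(z ^ 2 / 2) * κ t + z * β t) ∂lam) =
      Complex.exp (-δ * z) := by
    refine htend.frequently (hcon.mono fun θ hθ => ?_)
    rw [hre, hθ]; push_cast; rfl
  have heq := AnalyticOnNhd.eqOn_of_preconnected_of_frequently_eq (U := univ)
    (hd.differentiableOn.analyticOnNhd isOpen_univ) (hd2.differentiableOn.analyticOnNhd isOpen_univ)
    isPreconnected_univ (mem_univ _) hfreq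
  have hreal : ∀ θ : ℝ, ∫ t, Real.exp (-(θ ^ 2 / 2) * κ t + θ * β t) ∂lam = Real.exp (-δ * θ) := by
    intro θ
    have := heq (mem_univ (θ : ℂ))
    simp only at this
    rw [hre] at this
    exact_mod_cast this
  have hbig : ∀ θ : ℝ, θ ≤ -(2 * C) → Real.exp (-δ * θ) ≤ lam.real univ := by
    intro θ hθ
    rw [← hreal θ]
    have h1 : ‖∫ t, Real.exp (-(θ ^ 2 / 2) * κ t + θ * β t) ∂lam‖ ≤ 1 * lam.real univ := by
      refine norm_integral_le_of_norm_le_const (μ := lam) ?_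
      filter_upwards [hK, hB] with t ht h2
      rw [Real.norm_eq_abs, abs_of_pos (Real.exp_pos _), Real.exp_le_one_iff]
      have h3 := (abs_le.1 h2).1
      nlinarith [mul_nonneg (by linarith : 0 ≤ -θ) (by linarith : 0 ≤ β t + C * κ t),
        mul_nonneg (mul_nonneg (by linarith : 0 ≤ -θ) ht.1) (by linarith : 0 ≤ -θ - 2 * C)]
    rw [one_mul] at h1
    exact (le_abs_self _).trans h1
  have hlim : Tendsto (fun θ : ℝ => Real.exp (-δ * θ)) atBot atTop := by
    refine Real.tendsto_exp_atTop.comp ?_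
    exact tendsto_id.const_mul_atBot_of_neg (by linarith)
  obtain ⟨θ, h1, h2⟩ := ((hlim.eventually_gt_atTop (lam.real univ)).and (eventually_le_atBot (-(2 * C)))).exists
  linarith [hbig θ h2]

end Entire

section SmallTime

lemma analytic_flat (G : ℝ → ℝ) (hG : AnalyticAt ℝ G 0) (A κ : ℝ) (hκ : 0 < κ)
    (hb : ∀ᶠ t in 𝓝[>] (0:ℝ), |G t| ≤ A * Real.exp (-κ / t)) : ∀ᶠ t in 𝓝 (0:ℝ), G t = 0 := by
  by_contra hcon
  obtain ⟨n, h, hh, hh0, hev⟩ := (hG.exists_eventuallyEq_pow_smul_nonzero_iff).2 hcon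
  have hlim1 : Tendsto h (𝓝[>] 0) (𝓝 (h 0)) := hh.continuousAt.tendsto.mono_left nhdsWithin_le_nhds
  have hlim2 : Tendsto (fun t : ℝ => A * ((t⁻¹) ^ n * Real.exp (-κ * t⁻¹))) (𝓝[>] 0) (𝓝 0) := by
    have h1 := (Real.tendsto_pow_mul_exp_neg_atTop_nhds_zero n)
    have h2 := h1.comp ((tendsto_inv_nhdsGT_zero (𝕜 := ℝ)).const_mul_atTop hκ)
    have h3 := h2.const_mul (A * (κ⁻¹) ^ n)
    rw [mul_zero] at h3
    refine h3.congr fun t => ?_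
    simp only [Function.comp_apply]
    rw [mul_pow]
    have : (κ⁻¹) ^ n * κ ^ n = 1 := by rw [← mul_pow, inv_mul_cancel₀ hκ.ne', one_pow]
    rw [show -(κ * t⁻¹) = -κ * t⁻¹ by ring]
    linear_combination (A * (t⁻¹) ^ n * Real.exp (-κ * t⁻¹)) * this
  have hle : ∀ᶠ t in 𝓝[>] (0:ℝ), ‖h t‖ ≤ A * ((t⁻¹) ^ n * Real.exp (-κ * t⁻¹)) := by
    filter_upwards [hb, hev.filter_mono nhdsWithin_le_nhds, self_mem_nhdsWithin] with t h1 h2 h3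
    have h3 : 0 < t := h3
    rw [h2, sub_zero, smul_eq_mul, abs_mul, abs_of_pos (by positivity)] at h1
    rw [Real.norm_eq_abs]
    have h4 : |h t| = (t⁻¹) ^ n * (t ^ n * |h t|) := by
      rw [← mul_assoc, ← mul_pow, inv_mul_cancel₀ h3.ne', one_pow, one_mul]
    rw [h4]
    calc (t⁻¹) ^ n * (t ^ n * |h t|) ≤ (t⁻¹) ^ n * (A * Real.exp (-κ / t)) := by gcongr
      _ = _ := by rw [div_eq_mul_inv]; ring
  have := tendsto_nhds_unique hlim1 (squeeze_zero_norm' hle hlim2)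
  exact hh0 this

end SmallTime

section SmallTime2

lemma phi_expand (b : ℝ → ℝ) (s0 θ t : ℝ) (ht : 0 < t) :
    phi (fun s => s * b (1 / s)) s0 θ (1 / t) = Real.exp (-(θ * (θ - 2 * b 0) / 2) * (1 / t) +
      θ * dslope b 0 t + (s0 * θ ^ 2 / 2 - θ * (s0 * b (1 / s0)))) := by
  rw [phi, dslope_of_ne _ ht.ne', slope_def_field]
  congr 1
  simp only [one_div_one_div, sub_zero]
  field_simp
  ring

lemma small_time (b : ℝ → ℝ) (hb : AnalyticAt ℝ b 0) (hb0 : 0 < b 0)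
    (hc : AnalyticOnNhd ℝ (fun s => s * b (1 / s)) (Ioi 0)) (s0 : ℝ) (hs0 : 0 < s0) (η : ℝ) (hη : 0 < η)
    (ν : Measure ℝ) [IsFiniteMeasure ν] (hν : ∀ᵐ θ ∂ν, θ = 2 * b 0 ∨ 2 * b 0 + η ≤ θ)
    (hF : ∀ s > s0, ∫ θ, phi (fun s => s * b (1 / s)) s0 θ s ∂ν = 1) :
    ∀ᵐ θ ∂ν, θ = 2 * b 0 := by
  set a := 2 * b 0 with ha
  have ha0 : 0 < a := by linarith
  set c := fun s => s * b (1 / s) with hcdef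
  have hνpos : ∀ᵐ θ ∂ν, 0 < θ := by
    filter_upwards [hν] with θ hθ
    rcases hθ with h | h <;> linarith
  have hIntg : ∀ s > s0, Integrable (fun θ => phi c s0 θ s) ν := by
    intro s hs
    simpa using phi_integrable c hc s0 s hs0 hs ν hνpos 0
  have hq : AnalyticAt ℝ (dslope b 0) 0 := by
    obtain ⟨p, hp⟩ := hb
    exact ⟨_, hp.has_fpower_series_dslope_fslope⟩
  set q := dslope b 0 with hqdef
  obtain ⟨Cb, hCb⟩ : ∃ Cb : ℝ, ∀ᶠ t in 𝓝 (0:ℝ), |q t| < Cb :=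
    ⟨|q 0| + 1, hq.continuousAt.abs.eventually_lt continuousAt_const (by simp)⟩
  obtain ⟨r, hr, hCb⟩ := Metric.eventually_nhds_iff.1 hCb
  have hCb : ∀ t, 0 < t → t < r → |q t| < Cb := fun t h1 h2 => hCb (by
    rw [Real.dist_eq, sub_zero, abs_of_pos h1]; exact h2)
  obtain ⟨t1, ht1, ht1'⟩ : ∃ t1, 0 < t1 ∧ t1 < min r (1 / s0) :=
    exists_between (lt_min hr (by positivity))
  have ht1r := ht1'.trans_le (min_le_left _ _)
  have hinv : ∀ t, 0 < t → t ≤ t1 → s0 < 1 / t := by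
    intro t h1 h2
    have := h2.trans_lt (ht1'.trans_le (min_le_right _ _))
    rw [lt_div_iff₀ hs0] at this
    rw [lt_div_iff₀ h1]; linarith
  have hCb0 : 0 < Cb := (abs_nonneg _).trans_lt (hCb t1 ht1 ht1r)
  set m0 := ν.real {a} * Real.exp (s0 * a ^ 2 / 2 - a * (s0 * b (1 / s0))) with hm0
  have hdecomp : ∀ t, 0 < t → t ≤ t1 → ∫ θ in {a}ᶜ, phi c s0 θ (1 / t) ∂ν = 1 - m0 * Real.exp (a * q t) := by
    intro t h1 h2
    have h3 := integral_add_compl (measurableSet_singleton a) (hIntg _ (hinv t h1 h2))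
    rw [hF _ (hinv t h1 h2), integral_singleton] at h3
    have h4 : phi c s0 a (1 / t) = Real.exp (s0 * a ^ 2 / 2 - a * (s0 * b (1 / s0))) * Real.exp (a * q t) := by
      rw [hcdef, phi_expand b s0 a t h1, ← ha, ← Real.exp_add]
      congr 1; ring
    rw [h4, smul_eq_mul] at h3
    rw [hm0]; linarith
  set E := Real.exp (a * (η / 2 * (1 / t1) + 2 * Cb)) with hE
  have hcmp : ∀ t, 0 < t → t ≤ t1 → 0 ≤ η / 2 * (1 / t - 1 / t1) - 2 * Cb → ∀ θ, a + η ≤ θ →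
      phi c s0 θ (1 / t) ≤ (E * Real.exp (-(a * η / 2) / t)) * phi c s0 θ (1 / t1) := by
    intro t h1 h2 hX θ hθ
    rw [hcdef, phi_expand b s0 θ t h1, phi_expand b s0 θ t1 ht1, ← ha, hE, ← Real.exp_add, ← Real.exp_add,
      Real.exp_le_exp]
    have hq1 := abs_lt.1 (hCb t h1 (h2.trans_lt ht1r))
    have hq2 := abs_lt.1 (hCb t1 ht1 ht1r)
    have hθ0 : 0 < θ := by linarith
    have e1 : -(a * η / 2) / t = -(a * (η / 2 * (1 / t))) := by ring
    rw [e1]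
    have hd : 0 ≤ 1 / t - 1 / t1 := sub_nonneg.2 (one_div_le_one_div_of_le h1 h2)
    have k1 : 0 ≤ θ * (θ - a - η) * (1 / t - 1 / t1) :=
      mul_nonneg (mul_nonneg hθ0.le (by linarith)) hd
    have k2 : θ * q t ≤ θ * Cb := mul_le_mul_of_nonneg_left hq1.2.le hθ0.le
    have k3 : θ * (-Cb) ≤ θ * q t1 := mul_le_mul_of_nonneg_left hq2.1.le hθ0.le
    have k4 : 0 ≤ (θ - a) * (η / 2 * (1 / t - 1 / t1) - 2 * Cb) := mul_nonneg (by linarith) hX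
    nlinarith
  have hrest : ∀ t, 0 < t → t ≤ t1 → 0 ≤ η / 2 * (1 / t - 1 / t1) - 2 * Cb →
      |1 - m0 * Real.exp (a * q t)| ≤ E * Real.exp (-(a * η / 2) / t) := by
    intro t h1 h2 hX
    rw [← hdecomp t h1 h2, abs_of_nonneg (integral_nonneg fun θ => (phi_pos _ _ _ _).le)]
    calc ∫ θ in {a}ᶜ, phi c s0 θ (1 / t) ∂ν
        ≤ ∫ θ in {a}ᶜ, (E * Real.exp (-(a * η / 2) / t)) * phi c s0 θ (1 / t1) ∂ν := by
          refine integral_mono_ae (hIntg _ (hinv t h1 h2)).integrableOn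
            ((hIntg _ (hinv t1 ht1 le_rfl)).integrableOn.const_mul _) ?_
          filter_upwards [ae_restrict_of_ae hν, ae_restrict_mem (measurableSet_singleton a).compl] with θ hθ hθ2
          exact hcmp t h1 h2 hX θ (hθ.resolve_left hθ2)
      _ = (E * Real.exp (-(a * η / 2) / t)) * ∫ θ in {a}ᶜ, phi c s0 θ (1 / t1) ∂ν := integral_const_mul _ _
      _ ≤ (E * Real.exp (-(a * η / 2) / t)) * 1 := by
          gcongr
          exact (setIntegral_le_integral (hIntg _ (hinv t1 ht1 le_rfl))
            (Eventually.of_forall fun θ => (phi_pos _ _ _ _).le)).trans (hF _ (hinv t1 ht1 le_rfl)).le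
      _ = _ := mul_one _
  have hlim : ∀ᶠ t in 𝓝[>] (0:ℝ), 0 ≤ η / 2 * (1 / t - 1 / t1) - 2 * Cb := by
    filter_upwards [(tendsto_inv_nhdsGT_zero (𝕜 := ℝ)).eventually_ge_atTop (2 * Cb / (η / 2) + 1 / t1)] with t ht
    have : 2 * Cb / (η / 2) ≤ 1 / t - 1 / t1 := by rw [one_div t]; linarith
    rw [div_le_iff₀ (by positivity)] at this
    linarith
  have hflat := analytic_flat (fun t => 1 - m0 * Real.exp (a * q t)) (by fun_prop) E (a * η / 2) (by positivity)
    (by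
      filter_upwards [hlim, Ioo_mem_nhdsGT ht1] with t h1 h2
      exact hrest t h2.1 h2.2.le h1)
  obtain ⟨t, h1, h2⟩ := ((hflat.filter_mono (nhdsWithin_le_nhds (s := Ioi 0))).and (Ioo_mem_nhdsGT ht1)).exists
  have hz := hdecomp t h2.1 h2.2.le
  rw [h1, integral_eq_zero_iff_of_nonneg (fun θ => (phi_pos _ _ _ _).le)
    (hIntg _ (hinv t h2.1 h2.2.le)).integrableOn] at hz
  rw [Filter.EventuallyEq, ae_restrict_iff' (measurableSet_singleton a).compl] at hz
  filter_upwards [hz] with θ hθ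
  by_contra hne
  exact (phi_pos c s0 θ (1 / t)).ne' (hθ hne)

end SmallTime2

section Support

lemma ae_exists_gt (ν : Measure ℝ) (P : ℝ → Prop) (hP : ∀ᵐ θ ∂ν, P θ) (S : Set ℝ) (hS : ν S ≠ 0) :
    ∃ θ ∈ S, P θ := by
  by_contra hcon
  push Not at hcon
  exact hS (measure_mono_null (fun θ hθ => hcon θ hθ) hP)

lemma nu_bounded (b : ℝ → ℝ) (hba : AnalyticOnNhd ℝ b (Ici 0)) (hb0 : 0 < b 0)
    (t0 ε δ : ℝ) (hε : 0 < ε) (hεt : ε < t0) (hδ : 0 < δ) (bc : ℝ → ℝ) (hbc : Continuous bc)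
    (hbcb : ∀ t, 0 ≤ t → bc t = b t)
    (ν lam : Measure ℝ) [IsFiniteMeasure ν] [IsFiniteMeasure lam]
    (hν : ν (Ici (2 * b 0))ᶜ = 0) (hlam : lam (Icc ε t0)ᶜ = 0)
    (h2 : ∀ θ ∈ Ici (2 * b 0), ENNReal.ofReal (Real.exp (-δ * θ)) ≤ ∫⁻ t, ENNReal.ofReal (kk bc t0 θ t) ∂lam)
    (hs1 : ∀ᵐ t ∂lam, ∫⁻ θ, ENNReal.ofReal (kk bc t0 θ t) ∂ν = 1)
    (hs2 : ∀ᵐ θ ∂ν, ∫⁻ t, ENNReal.ofReal (kk bc t0 θ t) ∂lam = ENNReal.ofReal (Real.exp (-δ * θ))) :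
    ∃ N, ν (Ioi N) = 0 := by
  by_contra hN
  push Not at hN
  have ht0 : 0 < t0 := hε.trans hεt
  set a := 2 * b 0 with ha
  have ha0 : 0 < a := by linarith
  set c := fun s => s * b (1 / s) with hcdef
  have hc : AnalyticOnNhd ℝ c (Ioi 0) := by
    intro s hs
    have hs' : (0 : ℝ) < s := hs
    have h1 : AnalyticAt ℝ (fun s : ℝ => 1 / s) s := analyticAt_const.div analyticAt_id hs'.ne'
    have h2 : AnalyticAt ℝ b (1 / s) := hba _ (by simp [hs'.le])
    exact analyticAt_id.mul (h2.comp h1)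
  set s0 := 1 / t0 with hs0def
  have hs0 : 0 < s0 := by positivity
  have hkphi : ∀ θ t, 0 < t → kk bc t0 θ t = phi c s0 θ (1 / t) := by
    intro θ t ht
    rw [kk, phi, hcdef, hs0def]
    simp only [one_div_one_div]
    rw [hbcb t ht.le, hbcb t0 ht0.le]
    congr 1
    ring
  set κ := fun t : ℝ => 1 / t - 1 / t0 with hκ
  set β := fun t : ℝ => bc t / t - bc t0 / t0 with hβ
  have hkk : ∀ θ t, kk bc t0 θ t = Real.exp (-(θ ^ 2 / 2) * κ t + θ * β t) := fun θ t => rfl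
  have hκm : Measurable κ := by rw [hκ]; fun_prop
  have hβm : Measurable β := by rw [hβ]; have := hbc.measurable; fun_prop
  have hkm : ∀ t, Measurable (fun θ => kk bc t0 θ t) := by intro t; unfold kk; fun_prop
  have hkm2 : ∀ θ, Measurable (fun t => kk bc t0 θ t) := by
    intro θ; have := hbc.measurable; unfold kk; fun_prop
  have hlam' : ∀ᵐ t ∂lam, t ∈ Icc ε t0 := hlam
  have hν' : ∀ᵐ θ ∂ν, a ≤ θ := hν
  have hs01 : s0 ≤ 1 / ε := one_div_le_one_div_of_le hε hεt.le
  obtain ⟨K, hK, hlip⟩ := c_lip c hc s0 (1 / ε) hs0 hs01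
  have hκI : ∀ t ∈ Icc ε t0, 0 ≤ κ t ∧ κ t ≤ 1 / ε := by
    intro t ht
    have htp := hε.trans_le ht.1
    have h1 := one_div_le_one_div_of_le htp ht.2
    have h2 := one_div_le_one_div_of_le hε ht.1
    simp only [hκ]
    constructor
    · linarith
    · have : 0 < 1 / t0 := by positivity
      linarith
  have hβI : ∀ t ∈ Icc ε t0, |β t| ≤ K * κ t := by
    intro t ht
    have htp := hε.trans_le ht.1
    have h1 := hlip (1 / t) ⟨one_div_le_one_div_of_le htp ht.2, one_div_le_one_div_of_le hε ht.1⟩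
    simp only [hcdef, hs0def, one_div_one_div] at h1
    simp only [hβ, hκ]
    rw [hbcb t htp.le, hbcb t0 ht0.le]
    have e : b t / t - b t0 / t0 = 1 / t * b t - 1 / t0 * b t0 := by ring
    rw [e]; exact h1
  -- no atom at t0
  have h3a : lam {t0} = 0 := by
    have hle : ∀ N : ℝ, lam {t0} ≤ ENNReal.ofReal (Real.exp (-δ * N)) := by
      intro N
      obtain ⟨θ, hθ, hθ2⟩ := ae_exists_gt ν _ hs2 (Ioi N) (hN N)
      calc lam {t0} = ∫⁻ t in {t0}, ENNReal.ofReal (kk bc t0 θ t) ∂lam := by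
            rw [lintegral_singleton, kk_self]; simp
        _ ≤ ∫⁻ t, ENNReal.ofReal (kk bc t0 θ t) ∂lam := setLIntegral_le_lintegral _ _
        _ = ENNReal.ofReal (Real.exp (-δ * θ)) := hθ2
        _ ≤ _ := by
          apply ENNReal.ofReal_le_ofReal
          rw [Real.exp_le_exp]
          have : N < θ := hθ
          nlinarith
    have hlim : Tendsto (fun N : ℝ => ENNReal.ofReal (Real.exp (-δ * N))) atTop (𝓝 0) := by
      have h1 : Tendsto (fun N : ℝ => Real.exp (-δ * N)) atTop (𝓝 0) :=
        Real.tendsto_exp_atBot.comp (tendsto_id.const_mul_atTop_of_neg (by linarith))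
      simpa using ENNReal.tendsto_ofReal h1
    exact le_antisymm (ge_of_tendsto' hlim hle) (zero_le)
  have h3b : ∀ τ < t0, lam (Ioo τ t0) ≠ 0 := by
    intro τ hτ hzero
    set τ' := max ε τ with hτ'
    have hτ't : τ' < t0 := max_lt hεt hτ
    have hτ'0 : 0 < τ' := hε.trans_le (le_max_left _ _)
    set κ0 := 1 / τ' - 1 / t0 with hκ0
    have hκ0p : 0 < κ0 := sub_pos.2 (one_div_lt_one_div_of_lt hτ'0 hτ't)
    have hae : ∀ᵐ t ∂lam, κ0 ≤ κ t ∧ β t ≤ K * (1 / ε) := by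
      have z1 : ∀ᵐ t ∂lam, t ∉ ({t0} : Set ℝ) := measure_eq_zero_iff_ae_notMem.1 h3a
      have z2 : ∀ᵐ t ∂lam, t ∉ Ioo τ t0 := measure_eq_zero_iff_ae_notMem.1 hzero
      filter_upwards [hlam', z1, z2] with t ht h1 h2
      have htp := hε.trans_le ht.1
      have h3 : t < t0 := lt_of_le_of_ne ht.2 h1
      have h4 : t ≤ τ := by
        by_contra h5
        exact h2 ⟨not_le.1 h5, h3⟩
      constructor
      · have := one_div_le_one_div_of_le htp (h4.trans (le_max_right ε τ))
        simp only [hκ0, hκ]; linarith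
      · exact ((le_abs_self _).trans (hβI t ht)).trans (mul_le_mul_of_nonneg_left (hκI t ht).2 hK)
    set B := K * (1 / ε) with hB
    have hineq : ∀ θ ∈ Ici a, 1 ≤ Real.exp (-(θ ^ 2 / 2) * κ0 + θ * (B + δ)) * lam.real univ := by
      intro θ hθ
      have hθ0 : 0 < θ := ha0.trans_le hθ
      have h5 : ENNReal.ofReal (Real.exp (-δ * θ)) ≤
          ENNReal.ofReal (Real.exp (-(θ ^ 2 / 2) * κ0 + θ * B) * lam.real univ) := by
        refine (h2 θ hθ).trans ?_
        calc ∫⁻ t, ENNReal.ofReal (kk bc t0 θ t) ∂lam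
            ≤ ∫⁻ t, ENNReal.ofReal (Real.exp (-(θ ^ 2 / 2) * κ0 + θ * B)) ∂lam := by
              apply lintegral_mono_ae
              filter_upwards [hae] with t ht
              apply ENNReal.ofReal_le_ofReal
              rw [hkk, Real.exp_le_exp]
              have := mul_le_mul_of_nonneg_left ht.1 (by positivity : 0 ≤ θ ^ 2 / 2)
              have := mul_le_mul_of_nonneg_left ht.2 hθ0.le
              linarith
          _ = _ := by
              rw [lintegral_const, ENNReal.ofReal_mul (Real.exp_pos _).le, ofReal_measureReal]
      rw [ENNReal.ofReal_le_ofReal_iff (by positivity)] at h5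
      have h6 := mul_le_mul_of_nonneg_left h5 (Real.exp_pos (δ * θ)).le
      rw [← Real.exp_add, ← mul_assoc, ← Real.exp_add] at h6
      have e1 : δ * θ + -δ * θ = 0 := by ring
      have e2 : δ * θ + (-(θ ^ 2 / 2) * κ0 + θ * B) = -(θ ^ 2 / 2) * κ0 + θ * (B + δ) := by ring
      rw [e1, e2, Real.exp_zero] at h6
      exact h6
    have hlim := (gauss_tendsto κ0 (B + δ) hκ0p).mul_const (lam.real univ)
    rw [zero_mul] at hlim
    obtain ⟨θ, h7, h8⟩ := ((hlim.eventually_lt_const one_pos).and (eventually_ge_atTop a)).exists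
    linarith [hineq θ h8]
  have hνpos : ∀ᵐ θ ∂ν, 0 < θ := by filter_upwards [hν'] with θ hθ using ha0.trans_le hθ
  have h3c : ∃ᶠ s in 𝓝[>] s0, FF c s0 ν 0 s = 0 := by
    rw [(nhdsGT_basis s0).frequently_iff]
    intro u hu
    have hu0 : 0 < u := hs0.trans hu
    have h1 : 1 / u < t0 := by
      rw [div_lt_iff₀ hu0]
      rw [hs0def, div_lt_iff₀ ht0] at hu
      linarith
    obtain ⟨t, ht, ht1⟩ := ae_exists_gt lam _ hs1 (Ioo (1 / u) t0) (h3b _ h1)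
    have htp : 0 < t := lt_trans (by positivity) ht.1
    refine ⟨1 / t, ⟨one_div_lt_one_div_of_lt htp ht.2, ?_⟩, ?_⟩
    · have := ht.1
      rw [div_lt_iff₀ hu0] at this
      rw [div_lt_iff₀ htp]; linarith
    · rw [FF]
      simp only [iteratedDeriv_zero, if_true]
      have e : (fun θ => phi c s0 θ (1 / t)) = fun θ => kk bc t0 θ t := by
        funext θ; rw [hkphi θ t htp]
      rw [e, integral_eq_lintegral_of_nonneg_ae (Eventually.of_forall fun θ => (kk_pos _ _ _ _).le)
        (hkm t).aestronglyMeasurable, ht1]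
      simp
  have h3e := FF_all c hc s0 hs0 ν hνpos h3c
  have hF : ∀ s > s0, ∫ θ, phi c s0 θ s ∂ν = 1 := by
    intro s hs
    have := h3e s hs
    rw [FF] at this
    simp only [iteratedDeriv_zero, if_true] at this
    linarith
  have h3f := entire_zero lam κ β hκm hβm (1 / ε) K δ hδ hK
    (by filter_upwards [hlam'] with t ht using hκI t ht)
    (by filter_upwards [hlam'] with t ht using hβI t ht) a
  obtain ⟨η, hη, h3f⟩ : ∃ η > 0, ∀ θ ∈ Ioo a (a + η),
      ∫ t, Real.exp (-(θ ^ 2 / 2) * κ t + θ * β t) ∂lam ≠ Real.exp (-δ * θ) := by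
    rw [eventually_nhdsWithin_iff, Metric.eventually_nhds_iff] at h3f
    obtain ⟨η, hη, h⟩ := h3f
    refine ⟨η, hη, fun θ hθ => h ?_ ?_⟩
    · rw [Real.dist_eq, abs_of_pos (by linarith [hθ.1])]; linarith [hθ.2]
    · exact hθ.1.ne'
  have hae : ∀ᵐ θ ∂ν, θ = 2 * b 0 ∨ 2 * b 0 + η ≤ θ := by
    filter_upwards [hν', hs2] with θ h1 h2
    rw [← ha]
    by_contra hcon
    push Not at hcon
    refine h3f θ ⟨lt_of_le_of_ne h1 (Ne.symm hcon.1), hcon.2⟩ ?_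
    have e : (fun t => Real.exp (-(θ ^ 2 / 2) * κ t + θ * β t)) = fun t => kk bc t0 θ t := by
      funext t; rw [hkk]
    rw [e, integral_eq_lintegral_of_nonneg_ae (Eventually.of_forall fun t => (kk_pos _ _ _ _).le)
      (hkm2 θ).aestronglyMeasurable, h2, ENNReal.toReal_ofReal (Real.exp_pos _).le]
  have hfin := small_time b (hba 0 (by simp)) hb0 hc s0 hs0 η hη ν hae hF
  refine hN a (measure_mono_null ?_ hfin)
  intro θ hθ
  have : a < θ := hθ
  simp only [mem_compl_iff, mem_setOf_eq]
  exact this.ne'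

end Support

section Final

lemma rTheta_meas2 (bc : ℝ → ℝ) (hbc : Continuous bc) :
    Measurable (Function.uncurry fun θ t => ENNReal.ofReal (rTheta θ t (bc t))) := by
  have := hbc.measurable
  unfold rTheta
  unfold Function.uncurry
  fun_prop

lemma kk_meas2 (bc : ℝ → ℝ) (hbc : Continuous bc) (t0 : ℝ) :
    Measurable (Function.uncurry fun θ t => ENNReal.ofReal (kk bc t0 θ t)) := by
  have := hbc.measurable
  unfold kk
  unfold Function.uncurry
  fun_prop

lemma lam_univ (lam : Measure ℝ) (S : Set ℝ) (hS : MeasurableSet S) (h : lam Sᶜ = 0) : lam S = lam univ := by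
  rw [← measure_add_measure_compl hS, h, add_zero]

lemma weak_final (b bc : ℝ → ℝ) (hbc : Continuous bc) (hbcb : ∀ t, 0 ≤ t → bc t = b t) (t0 x0 ε : ℝ)
    (hε : 0 < ε) (μ lam : Measure ℝ) (hμ : D1epsAdm b t0 ε μ) (hl : P1epsAdm b t0 x0 ε lam) :
    ∫⁻ θ, ENNReal.ofReal (rTheta θ t0 x0) ∂μ ≤ lam (Icc ε t0) := by
  obtain ⟨hf, hμ1, hμ2⟩ := hμ
  obtain ⟨hf', hl1, hl2⟩ := hl
  rw [lam_univ lam _ measurableSet_Icc hl1]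
  have hl' : ∀ᵐ t ∂lam, t ∈ Icc ε t0 := hl1
  refine weak_dual μ lam (fun θ t => ENNReal.ofReal (rTheta θ t (bc t))) (rTheta_meas2 bc hbc) _ ?_ ?_
  · filter_upwards [hl'] with t ht
    rw [hbcb t (hε.le.trans ht.1)]
    exact hμ2 t ht
  · have hμ' : ∀ᵐ θ ∂μ, θ ∈ Ici (2 * b 0) := hμ1
    filter_upwards [hμ'] with θ hθ
    refine (hl2 θ hθ).trans (le_of_eq ?_)
    apply lintegral_congr_ae
    filter_upwards [hl'] with t ht
    rw [hbcb t (hε.le.trans ht.1)]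

end Final

theorem stmt_8 (b : ℝ → ℝ)
    (hba : AnalyticOnNhd ℝ b (Set.Ici 0)) (hbconc : ConcaveOn ℝ (Set.Ici 0) b)
    (hb0 : 0 < b 0) (hbderiv : ∃ d : ℝ, HasDerivWithinAt b d (Set.Ici 0) 0)
    (t0 x0 : ℝ) (ht0 : 0 < t0) (hx0 : x0 < b t0) :
    ∀ ε ∈ Set.Ioo 0 t0,
      ∃ (μ1 lam1 : Measure ℝ), D1epsAdm b t0 ε μ1 ∧ P1epsAdm b t0 x0 ε lam1 ∧
        (∫⁻ θ, ENNReal.ofReal (rTheta θ t0 x0) ∂μ1)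
          = (⨆ μ ∈ {μ : Measure ℝ | D1epsAdm b t0 ε μ},
              ∫⁻ θ, ENNReal.ofReal (rTheta θ t0 x0) ∂μ) ∧
        (⨆ μ ∈ {μ : Measure ℝ | D1epsAdm b t0 ε μ},
            ∫⁻ θ, ENNReal.ofReal (rTheta θ t0 x0) ∂μ)
          = (⨅ lam ∈ {lam : Measure ℝ | P1epsAdm b t0 x0 ε lam}, lam (Set.Icc ε t0)) ∧
        (⨅ lam ∈ {lam : Measure ℝ | P1epsAdm b t0 x0 ε lam}, lam (Set.Icc ε t0))
          = lam1 (Set.Icc ε t0) ∧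
        (∀ᵐ t ∂lam1, rMu μ1 t (b t) = 1) ∧
        (∀ᵐ θ ∂μ1, (∫⁻ t, ENNReal.ofReal (rTheta θ t (b t)) ∂lam1)
          = ENNReal.ofReal (rTheta θ t0 x0)) := by
  intro ε hεI
  have hε : 0 < ε := hεI.1
  have hεt : ε < t0 := hεI.2
  set bc : ℝ → ℝ := fun t => b (max t 0) with hbcdef
  have hbc : Continuous bc :=
    hba.continuousOn.comp_continuous (by fun_prop) (fun t => by simp)
  have hbcb : ∀ t, 0 ≤ t → bc t = b t := fun t ht => by simp [hbcdef, max_eq_left ht]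
  set δ := (b t0 - x0) / t0 with hδdef
  have hδ : 0 < δ := div_pos (by linarith) ht0
  obtain ⟨ν, lam, hνf, hlf, hν, hlam, h1, h2, h3⟩ := dual_nu bc hbc (2 * b 0) t0 ε δ (by linarith) hε hεt hδ
  have hlam' : ∀ᵐ t ∂lam, t ∈ Icc ε t0 := hlam
  have hν' : ∀ᵐ θ ∂ν, θ ∈ Ici (2 * b 0) := hν
  obtain ⟨hs1, hs2⟩ := slackness ν lam (fun θ t => ENNReal.ofReal (kk bc t0 θ t)) (kk_meas2 bc hbc t0)
    (fun θ => ENNReal.ofReal (Real.exp (-δ * θ)))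
    (by filter_upwards [hlam'] with t ht using h1 t ht)
    (by filter_upwards [hν'] with θ hθ using h2 θ hθ) h3
  obtain ⟨N, hN⟩ := nu_bounded b hba hb0 t0 ε δ hε hεt hδ bc hbc hbcb ν lam hν hlam h2 hs1 hs2
  set w : ℝ → ℝ := fun θ => rTheta θ t0 (b t0) with hw
  have hwpos : ∀ θ, 0 < w θ := fun θ => Real.exp_pos _
  have hwc : Continuous w := by
    rw [hw]; unfold rTheta; fun_prop
  have hwic : Continuous (fun θ => (w θ)⁻¹) := hwc.inv₀ (fun θ => (hwpos θ).ne')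
  set d : ℝ → ℝ≥0∞ := fun θ => ENNReal.ofReal (w θ)⁻¹ with hd
  have hdm : Measurable d := hwic.measurable.ennreal_ofReal
  set μ1 := ν.withDensity d with hμ1
  have hrk : ∀ θ t, 0 < t → rTheta θ t (b t) = w θ * kk bc t0 θ t := by
    intro θ t ht
    have := rTheta_eq_kk bc t0 θ t ht.ne' ht0.ne'
    rw [hbcb t ht.le, hbcb t0 ht0.le] at this
    exact this
  have hrg : ∀ θ, rTheta θ t0 x0 = w θ * Real.exp (-δ * θ) := fun θ => rTheta_eq_gg θ t0 x0 (b t0) ht0.ne'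
  have hIntg : ∀ f : ℝ → ℝ, Measurable f → ∫⁻ θ, ENNReal.ofReal (w θ * f θ) ∂μ1 = ∫⁻ θ, ENNReal.ofReal (f θ) ∂ν := by
    intro f hf
    rw [hμ1, lintegral_withDensity_eq_lintegral_mul _ hdm (by have := hwc.measurable; fun_prop)]
    congr 1
    funext θ
    simp only [Pi.mul_apply, hd]
    rw [← ENNReal.ofReal_mul (inv_nonneg.2 (hwpos θ).le), ← mul_assoc, inv_mul_cancel₀ (hwpos θ).ne', one_mul]
  have hac : μ1 ≪ ν := withDensity_absolutelyContinuous _ _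
  have hkm : ∀ t, Measurable (fun θ => kk bc t0 θ t) := by intro t; unfold kk; fun_prop
  have hrmu : ∀ t, 0 < t → rMu μ1 t (b t) = ∫⁻ θ, ENNReal.ofReal (kk bc t0 θ t) ∂ν := by
    intro t ht
    rw [rMu, ← hIntg _ (hkm t)]
    simp only [hrk _ t ht]
  have hg : ∫⁻ θ, ENNReal.ofReal (rTheta θ t0 x0) ∂μ1 = ∫⁻ θ, ENNReal.ofReal (Real.exp (-δ * θ)) ∂ν := by
    rw [← hIntg _ (by fun_prop)]
    simp only [hrg]
  have hlamint : ∀ θ, ∫⁻ t, ENNReal.ofReal (rTheta θ t (b t)) ∂lam =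
      ENNReal.ofReal (w θ) * ∫⁻ t, ENNReal.ofReal (kk bc t0 θ t) ∂lam := by
    intro θ
    rw [← lintegral_const_mul' _ _ ENNReal.ofReal_ne_top]
    apply lintegral_congr_ae
    filter_upwards [hlam'] with t ht
    rw [hrk θ t (hε.trans_le ht.1), ENNReal.ofReal_mul (hwpos θ).le]
  have hfin : IsFiniteMeasure μ1 := by
    obtain ⟨M, hM⟩ := (isCompact_Icc (a := 2 * b 0) (b := N)).exists_bound_of_continuousOn hwic.continuousOn
    refine isFiniteMeasure_withDensity (ne_of_lt ?_)
    calc ∫⁻ θ, d θ ∂ν ≤ ∫⁻ θ, ENNReal.ofReal M ∂ν := by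
          apply lintegral_mono_ae
          have hN' : ∀ᵐ θ ∂ν, θ ∉ Ioi N := measure_eq_zero_iff_ae_notMem.1 hN
          filter_upwards [hν', hN'] with θ h4 h5
          apply ENNReal.ofReal_le_ofReal
          exact (le_abs_self _).trans (hM θ ⟨h4, not_lt.1 h5⟩)
      _ = ENNReal.ofReal M * ν univ := lintegral_const _
      _ < ∞ := ENNReal.mul_lt_top ENNReal.ofReal_lt_top (measure_lt_top _ _)
  have hD : D1epsAdm b t0 ε μ1 := by
    refine ⟨hfin, hac hν, fun t ht => ?_⟩
    rw [hrmu t (hε.trans_le ht.1)]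
    exact h1 t ht
  have hP : P1epsAdm b t0 x0 ε lam := by
    refine ⟨hlf, hlam, fun θ hθ => ?_⟩
    rw [hlamint, hrg, ENNReal.ofReal_mul (hwpos θ).le]
    gcongr
    exact h2 θ hθ
  have hweak := weak_final b bc hbc hbcb t0 x0 ε hε
  have hle : lam (Icc ε t0) ≤ ∫⁻ θ, ENNReal.ofReal (rTheta θ t0 x0) ∂μ1 := by
    rw [hg, lam_univ lam _ measurableSet_Icc hlam]; exact h3
  have hsup : (⨆ μ ∈ {μ : Measure ℝ | D1epsAdm b t0 ε μ}, ∫⁻ θ, ENNReal.ofReal (rTheta θ t0 x0) ∂μ)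
      = lam (Icc ε t0) := by
    apply le_antisymm
    · exact iSup₂_le fun μ hμ => hweak μ lam hμ hP
    · exact hle.trans (le_iSup₂ (f := fun (μ : Measure ℝ) (_ : μ ∈ {μ : Measure ℝ | D1epsAdm b t0 ε μ}) =>
        ∫⁻ θ, ENNReal.ofReal (rTheta θ t0 x0) ∂μ) μ1 hD)
  have hinf : (⨅ lam ∈ {lam : Measure ℝ | P1epsAdm b t0 x0 ε lam}, lam (Set.Icc ε t0)) = lam (Icc ε t0) := by
    apply le_antisymm
    · exact iInf₂_le (f := fun (lam : Measure ℝ) (_ : lam ∈ {lam : Measure ℝ | P1epsAdm b t0 x0 ε lam}) =>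
        lam (Set.Icc ε t0)) lam hP
    · exact le_iInf₂ fun l hl => hle.trans (hweak μ1 l hD hl)
  refine ⟨μ1, lam, hD, hP, ?_, hsup.trans hinf.symm, hinf, ?_, ?_⟩
  · rw [hsup]; exact le_antisymm (hweak μ1 lam hD hP) hle
  · filter_upwards [hlam', hs1] with t ht h4
    rw [hrmu t (hε.trans_le ht.1)]
    exact h4
  · filter_upwards [hac.ae_le hs2] with θ h4
    rw [hlamint, h4, hrg, ENNReal.ofReal_mul (hwpos θ).le]
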